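/- arXiv:2409.05744 — 10 statements merged into one kernel-verified Lean document; each statement's English description precedes it below -/
import Mathlib

section
/- Let X be a uniformly convex real Banach space, let r be a Helly sequence for X, and let 1 ≤ k ≤ n. If K_1, …, K_n are convex subsets of X such that for every subset J ⊆ {1,…,n} with |J| = k the intersection ⋂_{j∈J} K_j contains a point of the closed unit ball of X, then there exists a point x ∈ X such that dist(x, K_i) ≤ r_k for all i ∈ {1,…,n} (where dist(x,S) = inf_{s∈S} ‖x−s‖). -/
open scoped Classical

noncomputable section

/-- `y` is quasi-orthogonal to `x`: some nonzero continuous linear functional attains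
its norm on `x` and vanishes on `y`. -/
def QuasiOrth {X : Type*} [NormedAddCommGroup X] [NormedSpace ℝ X] (y x : X) : Prop :=
  ∃ f : X →L[ℝ] ℝ, f ≠ 0 ∧ f x = ‖f‖ * ‖x‖ ∧ f y = 0

/-- `ζ_X(ε) = inf {‖x + ε y‖ : ‖x‖ = ‖y‖ = 1, y ⌐ x}`. -/
def zetaConv (X : Type*) [NormedAddCommGroup X] [NormedSpace ℝ X] (ε : ℝ) : ℝ :=
  sInf {t : ℝ | ∃ x y : X, ‖x‖ = 1 ∧ ‖y‖ = 1 ∧ QuasiOrth y x ∧ t = ‖x + ε • y‖}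

/-- `ζ⁺_X(ε) = sup {‖x + ε y‖ : ‖x‖ = ‖y‖ = 1, y ⌐ x}`. -/
def zetaSmooth (X : Type*) [NormedAddCommGroup X] [NormedSpace ℝ X] (ε : ℝ) : ℝ :=
  sSup {t : ℝ | ∃ x y : X, ‖x‖ = 1 ∧ ‖y‖ = 1 ∧ QuasiOrth y x ∧ t = ‖x + ε • y‖}

/-- The modulus of convexity `δ_X(ε)`. -/
def modConv (X : Type*) [NormedAddCommGroup X] [NormedSpace ℝ X] (ε : ℝ) : ℝ :=
  sInf {t : ℝ | ∃ x y : X, ‖x‖ ≤ 1 ∧ ‖y‖ ≤ 1 ∧ ε ≤ ‖x - y‖ ∧ t = 1 - ‖x + y‖ / 2}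

/-- The modulus of smoothness `ρ_X(τ)`. -/
def modSmooth (X : Type*) [NormedAddCommGroup X] [NormedSpace ℝ X] (τ : ℝ) : ℝ :=
  sSup {t : ℝ | ∃ x y : X, ‖x‖ = 1 ∧ ‖y‖ = τ ∧ t = (‖x + y‖ + ‖x - y‖) / 2 - 1}

/-- `X` is uniformly convex: the modulus of convexity is positive on `(0, 2]`. -/
def UnifConvex (X : Type*) [NormedAddCommGroup X] [NormedSpace ℝ X] : Prop :=
  ∀ ε ∈ Set.Ioc (0 : ℝ) 2, 0 < modConv X ε

/-- `X` is uniformly smooth: `ρ_X(τ)/τ → 0` as `τ → 0⁺`. -/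
def UnifSmooth (X : Type*) [NormedAddCommGroup X] [NormedSpace ℝ X] : Prop :=
  Filter.Tendsto (fun τ => modSmooth X τ / τ) (nhdsWithin 0 (Set.Ioi 0)) (nhds 0)

/-- A Helly sequence for `X`: `r : {1,2,…} → (0,1]` with `r 1 = 1` and
`r (j+1) * ζ_X (r (j+1)) = r j` for all `j ≥ 1`. -/
def IsHellySeq (X : Type*) [NormedAddCommGroup X] [NormedSpace ℝ X] (r : ℕ → ℝ) : Prop :=
  (∀ j : ℕ, 1 ≤ j → r j ∈ Set.Ioc (0 : ℝ) 1) ∧ r 1 = 1 ∧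
    ∀ j : ℕ, 1 ≤ j → r (j + 1) * zetaConv X (r (j + 1)) = r j

end

section helly
variable {X : Type*} [NormedAddCommGroup X] [NormedSpace ℝ X]

lemma fn_le (f : X →L[ℝ] ℝ) (hf : ‖f‖ = 1) (z : X) : f z ≤ ‖z‖ := by
  have := f.le_opNorm z
  rw [hf, one_mul] at this
  exact (le_abs_self _).trans this

lemma quasi_norm {x y : X} (hx : ‖x‖ = 1) (h : QuasiOrth y x) :
    ∃ f : X →L[ℝ] ℝ, ‖f‖ = 1 ∧ f x = 1 ∧ f y = 0 := by
  obtain ⟨f, hf, h1, h2⟩ := h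
  have hF : ‖f‖ ≠ 0 := norm_ne_zero_iff.mpr hf
  refine ⟨‖f‖⁻¹ • f, ?_, ?_, ?_⟩
  · rw [norm_smul, norm_inv, norm_norm, inv_mul_cancel₀ hF]
  · simp [h1, hx, hF]
  · simp [h2]

lemma ray_mono (f : X →L[ℝ] ℝ) (hf : ‖f‖ = 1) {x u : X} (hx : ‖x‖ = 1) (hfx : f x = 1)
    (hu : 0 ≤ f u) {a b : ℝ} (ha : 0 ≤ a) (hab : a ≤ b) : ‖x + a • u‖ ≤ ‖x + b • u‖ := by
  rcases eq_or_lt_of_le (ha.trans hab) with hb | hb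
  · have : a = b := by linarith
    rw [this]
  · have h1 : 1 ≤ ‖x + b • u‖ := by
      refine le_trans ?_ (fn_le f hf _)
      simp only [map_add, map_smul, smul_eq_mul, hfx]
      nlinarith [mul_nonneg hb.le hu]
    have hl : 0 ≤ a / b := by positivity
    have hl1 : a / b ≤ 1 := (div_le_one hb).mpr hab
    have e : x + a • u = (1 - a / b) • x + (a / b) • (x + b • u) := by
      have : a = a / b * b := by field_simp
      conv_lhs => rw [this]
      module
    rw [e]
    refine (norm_add_le _ _).trans ?_
    rw [norm_smul, norm_smul, Real.norm_of_nonneg hl, Real.norm_of_nonneg (by linarith), hx]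
    nlinarith

lemma zeta_le {x y : X} (hx : ‖x‖ = 1) (hy : ‖y‖ = 1) (h : QuasiOrth y x) (ε : ℝ) :
    zetaConv X ε ≤ ‖x + ε • y‖ := by
  apply csInf_le
  · refine ⟨0, ?_⟩
    rintro t ⟨x, y, -, -, -, rfl⟩
    exact norm_nonneg _
  · exact ⟨x, y, hx, hy, h, rfl⟩

lemma zeta_mono (hne : ∃ x y : X, ‖x‖ = 1 ∧ ‖y‖ = 1 ∧ QuasiOrth y x) {a b : ℝ}
    (ha : 0 ≤ a) (hab : a ≤ b) : zetaConv X a ≤ zetaConv X b := by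
  obtain ⟨x0, y0, h1, h2, h3⟩ := hne
  refine le_csInf ⟨_, x0, y0, h1, h2, h3, rfl⟩ ?_
  rintro t ⟨x, y, hx, hy, h, rfl⟩
  obtain ⟨f, hf, hfx, hfy⟩ := quasi_norm hx h
  exact (zeta_le hx hy h a).trans (ray_mono f hf hx hfx hfy.ge ha hab)

lemma one_le_zeta (hne : ∃ x y : X, ‖x‖ = 1 ∧ ‖y‖ = 1 ∧ QuasiOrth y x) (a : ℝ) :
    1 ≤ zetaConv X a := by
  obtain ⟨x0, y0, h1, h2, h3⟩ := hne
  refine le_csInf ⟨_, x0, y0, h1, h2, h3, rfl⟩ ?_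
  rintro t ⟨x, y, hx, hy, h, rfl⟩
  obtain ⟨f, hf, hfx, hfy⟩ := quasi_norm hx h
  have := fn_le f hf (x + a • y)
  simpa [hfx, hfy] using this

/-- monotonicity lemma -/
lemma mono_lemma (f : X →L[ℝ] ℝ) (hf : ‖f‖ = 1) {x y u : X} (hx : ‖x‖ = 1) (hy : ‖y‖ = 1)
    (hu : ‖u‖ = 1) (hfx : f x = 1) (hfy : f y = 0) {α β s : ℝ} (hα : 0 ≤ α) (hβ : 0 < β)
    (hs : 0 < s) (e : u = α • x + β • y) : ‖y + s • x‖ ≤ ‖u + s • x‖ := by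
  have hαs : 0 < α + s := by linarith
  rcases le_total (s * β) (α + s) with h | h
  · set c : ℝ := s * β / (α + s) with hc
    have hc0 : 0 ≤ c := by positivity
    have hc1 : c ≤ 1 := (div_le_one hαs).mpr h
    set τ : ℝ := α / (α + s) with hτ
    have hτ0 : 0 ≤ τ := by positivity
    have hτ1 : τ ≤ 1 := (div_le_one hαs).mpr (by linarith)
    have hq : c • y = u - τ • (u + s • x) := by
      rw [e]
      have h1 : α - τ * (α + s) = 0 := by rw [hτ]; field_simp; ring
      have h2 : c = β - τ * β := by rw [hτ, hc]; field_simp; ring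
      rw [h2]
      have : α • x + β • y - τ • (α • x + β • y + s • x) =
        (α - τ * (α + s)) • x + (β - τ * β) • y := by module
      rw [this, h1]; simp
    have a1 : ‖y + s • x‖ ≤ (1 - c) + (1 - τ) * ‖u + s • x‖ := by
      have : y + s • x = (1 - c) • y + (1 - τ) • (u + s • x) := by
        have : (1 - c) • y = y - c • y := by module
        rw [this, hq]; module
      rw [this]
      refine (norm_add_le _ _).trans ?_
      rw [norm_smul, norm_smul, Real.norm_of_nonneg (by linarith),
        Real.norm_of_nonneg (by linarith), hy, mul_one]
    have a2 : 1 ≤ c + τ * ‖u + s • x‖ := by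
      have : u = c • y + τ • (u + s • x) := by rw [hq]; module
      have h3 := norm_add_le (c • y) (τ • (u + s • x))
      rw [← this, norm_smul, norm_smul, Real.norm_of_nonneg hc0, Real.norm_of_nonneg hτ0,
        hy, hu, mul_one] at h3
      exact h3
    linarith
  · have hM : α + s ≤ ‖u + s • x‖ := by
      refine le_trans ?_ (fn_le f hf _)
      rw [e]; simp [hfx, hfy]
    have hk : 0 ≤ s - (α + s) / β := by
      rw [sub_nonneg, div_le_iff₀ hβ]; exact h
    have e2 : y + s • x = (1 / β) • (u + s • x) + (s - (α + s) / β) • x := by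
      have h1 : s = 1 / β * (α + s) + (s - (α + s) / β) := by field_simp; ring
      have h2 : (1 : ℝ) = 1 / β * β := by field_simp
      calc y + s • x = (1 : ℝ) • y + s • x := by simp
        _ = (1 / β * β) • y + (1 / β * (α + s) + (s - (α + s) / β)) • x := by
          rw [← h1, ← h2]
        _ = _ := by rw [e]; module
    rw [e2]
    refine (norm_add_le _ _).trans ?_
    rw [norm_smul, norm_smul, Real.norm_of_nonneg (by positivity), Real.norm_of_nonneg hk, hx]
    set M := ‖u + s • x‖
    have hb1 : 1 ≤ β := by nlinarith
    have : (1 / β * M + (s - (α + s) / β) * 1) = M - ((M - s) * (β - 1) + α) / β := by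
      field_simp; ring
    rw [this]
    have : 0 ≤ ((M - s) * (β - 1) + α) / β := by
      apply div_nonneg _ hβ.le
      have := mul_nonneg (show 0 ≤ M - s by linarith) (show 0 ≤ β - 1 by linarith)
      linarith
    linarith

lemma core (hne : ∃ x y : X, ‖x‖ = 1 ∧ ‖y‖ = 1 ∧ QuasiOrth y x)
    (f : X →L[ℝ] ℝ) (hf : ‖f‖ = 1) {x w : X} (hx : ‖x‖ = 1) (hfx : f x = 1)
    (hw : 0 ≤ f w) {ε : ℝ} (hε : 0 < ε) (hεw : ε ≤ ‖w‖) : zetaConv X ε ≤ ‖x + w‖ := by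
  have hw0 : 0 < ‖w‖ := hε.trans_le hεw
  set u : X := ‖w‖⁻¹ • w with hu
  have hun : ‖u‖ = 1 := by
    rw [hu, norm_smul, norm_inv, norm_norm, inv_mul_cancel₀ hw0.ne']
  have hwu : w = ‖w‖ • u := by rw [hu, smul_smul, mul_inv_cancel₀ hw0.ne', one_smul]
  have hfu : 0 ≤ f u := by
    rw [hu]; simp only [map_smul, smul_eq_mul]; positivity
  have hray := ray_mono f hf hx hfx hfu hε.le hεw
  rw [← hwu] at hray
  refine le_trans ?_ hray
  set v : X := u - f u • x with hv
  by_cases hv0 : v = 0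
  · have hux : u = f u • x := sub_eq_zero.mp hv0
    have h1 : f u = 1 := by
      have := hun
      rw [hux, norm_smul, hx, mul_one, Real.norm_of_nonneg hfu] at this
      exact this
    rw [h1, one_smul] at hux
    obtain ⟨x0, y0, h1, h2, h3⟩ := hne
    refine (zeta_le h1 h2 h3 ε).trans ?_
    refine (norm_add_le _ _).trans ?_
    have : x + ε • u = (1 + ε) • x := by rw [hux]; module
    rw [this, norm_smul, norm_smul, h1, h2, hx, Real.norm_of_nonneg hε.le,
      Real.norm_of_nonneg (by linarith)]
    linarith
  · have hβ : 0 < ‖v‖ := norm_pos_iff.mpr hv0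
    set y : X := ‖v‖⁻¹ • v with hy
    have hyn : ‖y‖ = 1 := by
      rw [hy, norm_smul, norm_inv, norm_norm, inv_mul_cancel₀ hβ.ne']
    have hvy : v = ‖v‖ • y := by rw [hy, smul_smul, mul_inv_cancel₀ hβ.ne', one_smul]
    have hfv : f v = 0 := by rw [hv]; simp [hfx]
    have hfy : f y = 0 := by rw [hy]; simp [hfv]
    have huv : u = f u • x + ‖v‖ • y := by rw [← hvy, hv]; module
    have key := mono_lemma f hf hx hyn hun hfx hfy hfu hβ (inv_pos.mpr hε) huv
    have hq : QuasiOrth y x := by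
      refine ⟨f, ?_, ?_, hfy⟩
      · rintro rfl; simp at hf
      · rw [hf, hx, hfx, one_mul]
    refine (zeta_le hx hyn hq ε).trans ?_
    have e : ∀ z : X, x + ε • z = ε • (z + ε⁻¹ • x) := by
      intro z
      rw [smul_add, smul_smul, mul_inv_cancel₀ hε.ne', one_smul, add_comm]
    rw [e, e, norm_smul, norm_smul]
    exact mul_le_mul_of_nonneg_left key (norm_nonneg _)

lemma support {C : Set X} (hC : Convex ℝ C) {z0 : X} (hz0 : z0 ∈ C) (hpos : 0 < ‖z0‖)
    (hmin : ∀ z ∈ C, ‖z0‖ ≤ ‖z‖) :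
    ∃ f : X →L[ℝ] ℝ, ‖f‖ = 1 ∧ f z0 = ‖z0‖ ∧ ∀ z ∈ C, f z0 ≤ f z := by
  have hd : Disjoint (Metric.ball (0 : X) ‖z0‖) C := by
    rw [Set.disjoint_left]
    intro z hz hzC
    rw [mem_ball_zero_iff] at hz
    exact absurd (hmin z hzC) (not_le.mpr hz)
  obtain ⟨f, t, h1, h2⟩ := geometric_hahn_banach_open (convex_ball _ _) Metric.isOpen_ball hC hd
  have h3 : ∀ a ∈ Metric.closedBall (0 : X) ‖z0‖, f a ≤ t := by
    rw [← closure_ball (0 : X) hpos.ne']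
    have : IsClosed {a : X | f a ≤ t} := isClosed_le f.continuous continuous_const
    exact fun a ha => closure_minimal (fun a ha => (h1 a ha).le) this ha
  have ht : 0 < t := by
    have := h1 0 (Metric.mem_ball_self hpos)
    simpa using this
  have h4 : ∀ a : X, f a ≤ t / ‖z0‖ * ‖a‖ := by
    intro a
    by_cases ha : a = 0
    · simp [ha]
    have hap : 0 < ‖a‖ := norm_pos_iff.mpr ha
    have := h3 ((‖z0‖ / ‖a‖) • a) (by
      rw [mem_closedBall_zero_iff, norm_smul, Real.norm_of_nonneg (by positivity)]
      field_simp; exact le_rfl)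
    simp only [map_smul, smul_eq_mul] at this
    rw [div_mul_eq_mul_div, le_div_iff₀ hpos]
    rw [div_mul_eq_mul_div, div_le_iff₀ hap] at this
    linarith
  have h5 : ‖f‖ ≤ t / ‖z0‖ := by
    refine f.opNorm_le_bound (by positivity) fun a => ?_
    rw [Real.norm_eq_abs, abs_le]
    have := h4 (-a)
    simp only [map_neg, norm_neg] at this
    exact ⟨by linarith, h4 a⟩
  have h6 : f z0 ≤ t := h3 z0 (by simp)
  have h7 : f z0 = t := le_antisymm h6 (h2 z0 hz0)
  have h8 : t ≤ ‖f‖ * ‖z0‖ := by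
    rw [← h7]; exact (le_abs_self _).trans (f.le_opNorm z0)
  have h9 : ‖f‖ * ‖z0‖ = t := by
    refine le_antisymm ?_ h8
    rwa [le_div_iff₀ hpos] at h5
  have hF : 0 < ‖f‖ := by
    by_contra h
    have : ‖f‖ = 0 := le_antisymm (not_lt.mp h) (norm_nonneg _)
    rw [this, zero_mul] at h9; linarith
  refine ⟨‖f‖⁻¹ • f, ?_, ?_, ?_⟩
  · rw [norm_smul, norm_inv, norm_norm, inv_mul_cancel₀ hF.ne']
  · simp only [smul_apply, smul_eq_mul]
    rw [h7, ← h9, inv_mul_cancel_left₀ hF.ne']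
  · intro z hz
    simp only [smul_apply, smul_eq_mul]
    refine mul_le_mul_of_nonneg_left ?_ (by positivity)
    rw [h7]; exact h2 z hz

lemma hne_of_helly {r : ℕ → ℝ} (hr : IsHellySeq X r) :
    ∃ x y : X, ‖x‖ = 1 ∧ ‖y‖ = 1 ∧ QuasiOrth y x := by
  by_contra h
  have h2 := hr.2.2 1 le_rfl
  have : zetaConv X (r (1 + 1)) = 0 := by
    unfold zetaConv
    convert Real.sInf_empty
    ext t
    simp only [Set.mem_setOf_eq, Set.mem_empty_iff_false, iff_false]
    rintro ⟨x, y, h1, h2, h3, -⟩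
    exact h ⟨x, y, h1, h2, h3⟩
  rw [this, hr.2.1] at h2
  simp at h2

lemma helly_compact {r : ℕ → ℝ} (hr : IsHellySeq X r)
    {k n : ℕ} (hk1 : 1 ≤ k) (hkn : k ≤ n)
    (K : Fin n → Set X) (hconv : ∀ i, Convex ℝ (K i)) (hcpt : ∀ i, IsCompact (K i))
    (hball : ∀ J : Finset (Fin n), J.card = k →
      ∃ p ∈ Metric.closedBall (0 : X) 1, ∀ j ∈ J, p ∈ K j) :
    ∃ x : X, ∀ i : Fin n, Metric.infDist x (K i) ≤ r k := by
  have hne := hne_of_helly hr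
  by_contra hcon
  push Not at hcon
  set ρ := r k with hρ
  have hρ0 : 0 < ρ := (hr.1 k hk1).1
  have hball' : ∀ J : Finset (Fin n), J.card ≤ k →
      ∃ p : X, ‖p‖ ≤ 1 ∧ ∀ j ∈ J, p ∈ K j := by
    intro J hJ
    obtain ⟨J', hJJ, hc⟩ := Finset.exists_superset_card_eq hJ (by simpa using hkn)
    obtain ⟨p, hp, h⟩ := hball J' hc
    exact ⟨p, by simpa using hp, fun j hj => h j (hJJ hj)⟩
  have main : ∀ j : ℕ, 1 ≤ j → j ≤ k → ∃ J : Finset (Fin n), J.Nonempty ∧ J.card ≤ j ∧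
      ∀ z : X, (∀ i ∈ J, z ∈ K i) → ρ < r j * ‖z‖ := by
    intro j hj
    induction j, hj using Nat.le_induction with
    | base =>
      intro _
      obtain ⟨i, hi⟩ := hcon 0
      refine ⟨{i}, by simp, by simp, fun z hz => ?_⟩
      rw [hr.2.1, one_mul]
      have := Metric.infDist_le_dist_of_mem (x := (0 : X)) (hz i (by simp))
      rw [dist_zero_left] at this
      exact hi.trans_le this
    | succ j hj ih =>
      intro hjk
      obtain ⟨J, hJne, hJc, hJ⟩ := ih (by omega)
      obtain ⟨p, -, hp⟩ := hball' J (by omega)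
      set C : Set X := ⋂ i ∈ J, K i with hC
      have hmem : ∀ z, z ∈ C ↔ ∀ i ∈ J, z ∈ K i := by intro z; simp [hC]
      have hCconv : Convex ℝ C := convex_iInter₂ fun i _ => hconv i
      have hCcpt : IsCompact C := by
        obtain ⟨i0, hi0⟩ := hJne
        refine (hcpt i0).of_isClosed_subset ?_ (Set.biInter_subset_of_mem hi0)
        exact isClosed_biInter fun i _ => (hcpt i).isClosed
      obtain ⟨z0, hz0, hmin⟩ := hCcpt.exists_isMinOn ⟨p, (hmem p).2 hp⟩
        (continuous_norm.continuousOn)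
      have hmin' : ∀ z ∈ C, ‖z0‖ ≤ ‖z‖ := fun z hz => hmin hz
      have hr0 := (hr.1 j hj).1
      have hd := hJ z0 ((hmem z0).1 hz0)
      have hd0 : 0 < ‖z0‖ := by
        by_contra h
        have : ‖z0‖ = 0 := le_antisymm (not_lt.mp h) (norm_nonneg _)
        rw [this, mul_zero] at hd; linarith
      obtain ⟨f, hf, hfz, hfC⟩ := support hCconv hz0 hd0 hmin'
      obtain ⟨i, hi⟩ := hcon z0
      refine ⟨insert i J, by simp, (Finset.card_insert_le _ _).trans (by omega), ?_⟩
      intro z hz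
      have hzC : z ∈ C := (hmem z).2 fun l hl => hz l (Finset.mem_insert_of_mem hl)
      have hzi : ρ < ‖z - z0‖ := by
        have := Metric.infDist_le_dist_of_mem (x := z0) (hz i (Finset.mem_insert_self _ _))
        rw [dist_comm, dist_eq_norm] at this
        exact hi.trans_le this
      have hzz := hmin' z hzC
      have hz0' : 0 < ‖z‖ := hd0.trans_le hzz
      have hcore := core hne f hf (x := ‖z0‖⁻¹ • z0) (w := ‖z0‖⁻¹ • (z - z0)) (ε := ρ / ‖z0‖)
        (by rw [norm_smul, norm_inv, norm_norm, inv_mul_cancel₀ hd0.ne'])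
        (by simp [hfz, hd0.ne'])
        (by
          simp only [map_smul, map_sub, smul_eq_mul]
          exact mul_nonneg (by positivity) (sub_nonneg.2 (hfC z hzC)))
        (by positivity)
        (by
          rw [norm_smul, norm_inv, norm_norm, div_eq_inv_mul]
          exact mul_le_mul_of_nonneg_left hzi.le (by positivity))
      have e : ‖z0‖⁻¹ • z0 + ‖z0‖⁻¹ • (z - z0) = ‖z0‖⁻¹ • z := by module
      rw [e, norm_smul, norm_inv, norm_norm] at hcore
      -- now the numerical part
      by_contra hlt
      push Not at hlt
      have hstep := hr.2.2 j hj
      have hr1 := (hr.1 (j + 1) (by omega)).1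
      set R := r (j + 1) with hR
      have he' : R ≤ ρ / ‖z‖ := by rwa [le_div_iff₀ hz0']
      have hee : ρ / ‖z‖ ≤ ρ / ‖z0‖ := div_le_div_of_nonneg_left hρ0.le hd0 hzz
      have hz1 : zetaConv X R ≤ ‖z0‖⁻¹ * ‖z‖ :=
        (zeta_mono hne hr1.le (he'.trans hee)).trans hcore
      have hfin : r j ≤ ρ / ‖z0‖ := by
        rw [← hstep]
        calc R * zetaConv X R ≤ ρ / ‖z‖ * (‖z0‖⁻¹ * ‖z‖) :=
              mul_le_mul he' hz1 (by linarith [one_le_zeta hne R]) (by positivity)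
          _ = ρ / ‖z0‖ := by field_simp
      rw [le_div_iff₀ hd0] at hfin
      linarith
  obtain ⟨J, -, hJc, hJ⟩ := main k hk1 le_rfl
  obtain ⟨p, hp1, hp⟩ := hball' J hJc
  have := hJ p hp
  nlinarith

end helly

/-- **No-dimensional Helly theorem in uniformly convex Banach spaces.** -/
theorem no_dim_helly
    {X : Type*} [NormedAddCommGroup X] [NormedSpace ℝ X] [CompleteSpace X]
    (hX : UnifConvex X) {r : ℕ → ℝ} (hr : IsHellySeq X r)
    {k n : ℕ} (hk1 : 1 ≤ k) (hkn : k ≤ n)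
    (K : Fin n → Set X) (hconv : ∀ i, Convex ℝ (K i))
    (hball : ∀ J : Finset (Fin n), J.card = k →
      ∃ p ∈ Metric.closedBall (0 : X) 1, ∀ j ∈ J, p ∈ K j) :
    ∃ x : X, ∀ i : Fin n, Metric.infDist x (K i) ≤ r k := by
  have hb : ∀ J : {J : Finset (Fin n) // J.card = k},
      ∃ p ∈ Metric.closedBall (0 : X) 1, ∀ j ∈ J.1, p ∈ K j := fun J => hball J.1 J.2
  choose p hp hpK using hb
  let S : Fin n → Set X := fun i => p '' {J | i ∈ J.1}
  have hSK : ∀ i, convexHull ℝ (S i) ⊆ K i := by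
    intro i
    refine convexHull_min ?_ (hconv i)
    rintro _ ⟨J, hJ, rfl⟩
    exact hpK J i hJ
  obtain ⟨x, hx⟩ := helly_compact hr hk1 hkn (fun i => convexHull ℝ (S i))
    (fun i => convex_convexHull ℝ _)
    (fun i => (Set.toFinite (S i)).isCompact_convexHull ℝ)
    (fun J hJ => ⟨p ⟨J, hJ⟩, hp _, fun j hj =>
      subset_convexHull ℝ _ ⟨⟨J, hJ⟩, hj, rfl⟩⟩)
  refine ⟨x, fun i => le_trans ?_ (hx i)⟩
  refine Metric.infDist_le_infDist_of_subset (hSK i) ?_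
  obtain ⟨J, hJJ, hc⟩ := Finset.exists_superset_card_eq (s := {i}) (n := k)
    (by simpa using hk1) (by simpa using hkn)
  exact ⟨_, subset_convexHull ℝ _ ⟨⟨J, hc⟩, hJJ (by simp), rfl⟩⟩
end

section
/- Let X be a uniformly convex real Banach space, let r be a Helly sequence for X, let k ≥ 1, let α ∈ (0,1], and set β = 1 − (1−α)^{1/k}. Let 𝔽_1, …, 𝔽_k be finite nonempty families of convex subsets of X. If at least α·|𝔽_1|·⋯·|𝔽_k| of the rainbow k-tuples (K_1, …, K_k) ∈ 𝔽_1 × ⋯ × 𝔽_k are such that ⋂_{i=1}^{k} K_i contains a point of the closed unit ball of X, then there exist x ∈ X and i ∈ {1,…,k} such that at least β·|𝔽_i| members K of 𝔽_i satisfy dist(x, K) ≤ r_k. -/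
open scoped Classical

section Helpers

variable {X : Type*} [NormedAddCommGroup X] [NormedSpace ℝ X]

theorem exists_min_norm [CompleteSpace X] (hX : UnifConvex X) {C : Set X} (hc : IsClosed C)
    (hconv : Convex ℝ C) (hne : C.Nonempty) : ∃ p ∈ C, ∀ q ∈ C, ‖p‖ ≤ ‖q‖ := by
  set d := Metric.infDist (0 : X) C with hd
  have hdle : ∀ q ∈ C, d ≤ ‖q‖ := fun q hq => by
    have := Metric.infDist_le_dist_of_mem (x := (0 : X)) hq
    rwa [dist_zero_left] at this
  have hd0 : 0 ≤ d := Metric.infDist_nonneg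
  rcases hd0.eq_or_lt with h0 | hdpos
  · refine ⟨0, (hc.mem_iff_infDist_zero hne).2 h0.symm, fun q _ => by simp⟩
  have hseq : ∀ n : ℕ, ∃ x ∈ C, ‖x‖ < d + 1 / ((n : ℝ) + 1) := fun n => by
    have : d < d + 1 / ((n : ℝ) + 1) := by
      have : (0 : ℝ) < 1 / ((n : ℝ) + 1) := by positivity
      linarith
    obtain ⟨y, hy, h⟩ := (Metric.infDist_lt_iff hne).1 this
    exact ⟨y, hy, by rwa [dist_zero_left] at h⟩
  choose u huC hu using hseq
  have hcau : CauchySeq u := by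
    rw [Metric.cauchySeq_iff]
    intro ε hε
    set η := min (ε / (2 * d)) 2 with hη
    have hη0 : 0 < η := lt_min (by positivity) (by norm_num)
    have hδ := hX η ⟨hη0, min_le_right _ _⟩
    set δ := modConv X η with hδd
    obtain ⟨N, hN⟩ := exists_nat_one_div_lt (lt_min hdpos (mul_pos hδ hdpos))
    refine ⟨N, fun m hm n hn => ?_⟩
    by_contra hcon
    push Not at hcon
    rw [dist_eq_norm] at hcon
    set R := d + 1 / ((N : ℝ) + 1) with hR
    have hNpos : (0 : ℝ) < 1 / ((N : ℝ) + 1) := by positivity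
    have h1 := lt_of_lt_of_le hN (min_le_left _ _)
    have h2 := lt_of_lt_of_le hN (min_le_right _ _)
    have hRpos : 0 < R := by positivity
    have hle : ∀ m, N ≤ m → ‖u m‖ ≤ R := fun m hm => by
      refine (hu m).le.trans ?_
      have : 1 / ((m : ℝ) + 1) ≤ 1 / ((N : ℝ) + 1) := by
        apply one_div_le_one_div_of_le (by positivity)
        have : (N : ℝ) ≤ m := by exact_mod_cast hm
        linarith
      linarith
    have hn1 : ∀ v : X, ‖R⁻¹ • v‖ = ‖v‖ / R := fun v => by
      rw [norm_smul, Real.norm_of_nonneg (by positivity)]; field_simp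
    have key : δ ≤ 1 - ‖R⁻¹ • u m + R⁻¹ • u n‖ / 2 := by
      apply csInf_le
      · refine ⟨0, ?_⟩
        rintro t ⟨x, y, hx, hy, -, rfl⟩
        have := norm_add_le x y
        linarith
      · refine ⟨R⁻¹ • u m, R⁻¹ • u n, ?_, ?_, ?_, rfl⟩
        · rw [hn1]; exact (div_le_one hRpos).2 (hle m hm)
        · rw [hn1]; exact (div_le_one hRpos).2 (hle n hn)
        · rw [← smul_sub, hn1]
          refine (min_le_left _ _).trans ?_
          gcongr
          linarith
    have hmid : d ≤ ‖u m + u n‖ / 2 := by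
      have := hdle _ (hconv (huC m) (huC n) (by norm_num : (0 : ℝ) ≤ 1 / 2)
        (by norm_num : (0 : ℝ) ≤ 1 / 2) (by norm_num))
      rw [← smul_add, norm_smul] at this
      norm_num at this
      linarith
    rw [← smul_add, hn1] at key
    have : δ * R ≤ R - ‖u m + u n‖ / 2 := by
      calc δ * R ≤ (1 - ‖u m + u n‖ / R / 2) * R := by gcongr
        _ = _ := by field_simp
    nlinarith
  obtain ⟨p, hp⟩ := cauchySeq_tendsto_of_complete hcau
  refine ⟨p, hc.mem_of_tendsto hp (Filter.Eventually.of_forall huC), fun q hq => ?_⟩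
  refine le_trans ?_ (hdle q hq)
  have hl : Filter.Tendsto (fun n : ℕ => d + 1 / ((n : ℝ) + 1)) Filter.atTop (nhds (d + 0)) :=
    tendsto_const_nhds.add tendsto_one_div_add_atTop_nhds_zero_nat
  rw [add_zero] at hl
  exact le_of_tendsto_of_tendsto' hp.norm hl (fun n => (hu n).le)

theorem exists_support {C : Set X} (hconv : Convex ℝ C) {p : X} (hp : p ∈ C) (hp0 : p ≠ 0)
    (hmin : ∀ q ∈ C, ‖p‖ ≤ ‖q‖) :
    ∃ f : X →L[ℝ] ℝ, ‖f‖ = 1 ∧ f p = ‖p‖ ∧ ∀ q ∈ C, f p ≤ f q := by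
  have hpp : 0 < ‖p‖ := norm_pos_iff.2 hp0
  have hdis : Disjoint (Metric.ball (0 : X) ‖p‖) C := by
    rw [Set.disjoint_left]
    intro a ha haC
    have := hmin a haC
    rw [mem_ball_zero_iff] at ha
    linarith
  obtain ⟨f, t, h1, h2⟩ :=
    geometric_hahn_banach_open (convex_ball (0 : X) ‖p‖) Metric.isOpen_ball hconv hdis
  have ht0 : 0 < t := by simpa using h1 0 (by simpa using hpp)
  have hf0 : f ≠ 0 := by
    rintro rfl
    have := h2 p hp
    simp at this
    linarith
  have hfn : 0 < ‖f‖ := norm_pos_iff.2 hf0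
  have hfle : f p ≤ ‖f‖ * ‖p‖ := (le_abs_self _).trans (f.le_opNorm p)
  have hnt : ‖f‖ ≤ t / ‖p‖ := by
    refine f.opNorm_le_bound (by positivity) fun x => ?_
    by_cases hx : x = 0
    · simp [hx]
    have hxp : 0 < ‖x‖ := norm_pos_iff.2 hx
    have key : ∀ y : X, ‖y‖ = ‖x‖ → f y ≤ t / ‖p‖ * ‖x‖ := by
      intro y hy
      by_contra hcon
      push Not at hcon
      have hs : 0 < f y := lt_trans (by positivity) hcon
      have hm : (t / f y) • y ∈ Metric.ball (0 : X) ‖p‖ := by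
        rw [mem_ball_zero_iff, norm_smul, Real.norm_of_nonneg (by positivity), hy,
          div_mul_eq_mul_div, div_lt_iff₀ hs]
        rw [div_mul_eq_mul_div, div_lt_iff₀ hpp] at hcon
        linarith
      have := h1 _ hm
      rw [map_smul, smul_eq_mul, div_mul_cancel₀ _ hs.ne'] at this
      exact lt_irrefl _ this
    rw [Real.norm_eq_abs, abs_le]
    have a1 := key x rfl
    have a2 := key (-x) (norm_neg x)
    rw [map_neg] at a2
    constructor <;> linarith
  have htp : f p = ‖f‖ * ‖p‖ := by
    apply le_antisymm hfle
    rw [le_div_iff₀ hpp] at hnt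
    exact hnt.trans (h2 p hp)
  have hft : f p ≤ t := by rw [htp]; rwa [le_div_iff₀ hpp] at hnt
  refine ⟨‖f‖⁻¹ • f, ?_, ?_, fun q hq => ?_⟩
  · rw [norm_smul, norm_inv, norm_norm, inv_mul_cancel₀ hfn.ne']
  · simp only [ContinuousLinearMap.smul_apply, smul_eq_mul, htp]
    field_simp
  · simp only [ContinuousLinearMap.smul_apply, smul_eq_mul]
    have := hft.trans (h2 q hq)
    gcongr

theorem zetaConv_le {ε : ℝ} {x y : X} (hx : ‖x‖ = 1) (hy : ‖y‖ = 1) (h : QuasiOrth y x) :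
    zetaConv X ε ≤ ‖x + ε • y‖ := by
  refine csInf_le ⟨0, ?_⟩ ⟨x, y, hx, hy, h, rfl⟩
  rintro t ⟨x, y, -, -, -, rfl⟩
  exact norm_nonneg _

theorem zetaConv_le_one_add {ε : ℝ} (hε : 0 ≤ ε) : zetaConv X ε ≤ 1 + ε := by
  by_cases h : ∃ x y : X, ‖x‖ = 1 ∧ ‖y‖ = 1 ∧ QuasiOrth y x
  · obtain ⟨x, y, hx, hy, hq⟩ := h
    refine (zetaConv_le hx hy hq).trans ((norm_add_le _ _).trans ?_)
    rw [norm_smul, hx, hy, Real.norm_of_nonneg hε, mul_one]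
  · have : {t : ℝ | ∃ x y : X, ‖x‖ = 1 ∧ ‖y‖ = 1 ∧ QuasiOrth y x ∧ t = ‖x + ε • y‖} = ∅ := by
      ext t
      simp only [Set.mem_setOf_eq, Set.mem_empty_iff_false, iff_false]
      rintro ⟨x, y, hx, hy, hq, -⟩
      exact h ⟨x, y, hx, hy, hq⟩
    rw [zetaConv, this, Real.sInf_empty]
    linarith

theorem norm_add_smul_mono {f : X →L[ℝ] ℝ} (hf : ‖f‖ = 1) {x z : X} (hx : ‖x‖ = 1)
    (hfx : f x = 1) (hfz : f z = 0) {s t : ℝ} (hs : 0 ≤ s) (hst : s ≤ t) :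
    ‖x + s • z‖ ≤ ‖x + t • z‖ := by
  have h1 : 1 ≤ ‖x + t • z‖ := by
    have := (le_abs_self _).trans (f.le_opNorm (x + t • z))
    simpa [hf, hfx, hfz] using this
  rcases hs.eq_or_lt with h0 | hs0
  · subst h0; simpa [hx] using h1
  have ht : 0 < t := hs0.trans_le hst
  have e : x + s • z = (1 - s / t) • x + (s / t) • (x + t • z) := by
    rw [smul_add, smul_smul, div_mul_cancel₀ _ ht.ne']
    module
  have hl : s / t ≤ 1 := (div_le_one ht).2 hst
  have hl0 : 0 ≤ s / t := by positivity
  rw [e]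
  refine (norm_add_le _ _).trans ?_
  rw [norm_smul, norm_smul, Real.norm_of_nonneg hl0, Real.norm_of_nonneg (by linarith), hx]
  nlinarith

theorem zeta_key {f : X →L[ℝ] ℝ} (hf : ‖f‖ = 1) {x y : X} (hx : ‖x‖ = 1) (hy : ‖y‖ = 1)
    (hfx : f x = 1) (hfy : 0 ≤ f y) {ρ ε : ℝ} (hρ : 0 ≤ ρ) (hρε : ρ ≤ ε) :
    zetaConv X ρ ≤ ‖x + ε • y‖ := by
  have hε : 0 ≤ ε := hρ.trans hρε
  set a := f y with ha
  by_cases h0 : y - a • x = 0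
  · have hya : y = a • x := sub_eq_zero.1 h0
    have ha1 : a = 1 := by
      have := hy
      rw [hya, norm_smul, hx, Real.norm_of_nonneg hfy] at this
      linarith
    rw [ha1, one_smul] at hya
    have : x + ε • y = (1 + ε) • x := by rw [hya]; module
    rw [this, norm_smul, hx, Real.norm_of_nonneg (by linarith)]
    have := zetaConv_le_one_add (X := X) hρ
    linarith
  set b := ‖y - a • x‖ with hb
  have hbpos : 0 < b := norm_pos_iff.2 h0
  set z := b⁻¹ • (y - a • x) with hz
  have hz1 : ‖z‖ = 1 := by
    rw [hz, norm_smul, norm_inv, Real.norm_of_nonneg hbpos.le, ← hb, inv_mul_cancel₀ hbpos.ne']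
  have hfz : f z = 0 := by
    simp [hz, hfx, ← ha]
  have hyz : y = a • x + b • z := by
    rw [hz, smul_smul, mul_inv_cancel₀ hbpos.ne']; module
  have hq : QuasiOrth z x := ⟨f, by rintro rfl; simp at hf, by rw [hfx, hf, hx]; norm_num, hfz⟩
  refine (zetaConv_le hx hz1 hq).trans ((norm_add_smul_mono hf hx hfx hfz hρ hρε).trans ?_)
  have hεa : 0 ≤ ε * a := mul_nonneg hε hfy
  have hpos : 0 < 1 + ε * a := by linarith
  set s := ε * b / (1 + ε * a) with hs
  have hs0 : 0 ≤ s := by positivity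
  have hsm : (1 + ε * a) * s = ε * b := by rw [hs]; field_simp
  have hP : x + ε • y = (1 + ε * a) • (x + s • z) := by
    rw [smul_add, smul_smul, hsm]
    nth_rewrite 1 [hyz]
    module
  have hPn : ‖x + ε • y‖ = (1 + ε * a) * ‖x + s • z‖ := by
    rw [hP, norm_smul, Real.norm_of_nonneg hpos.le]
  rw [hPn]
  rcases le_total s ε with hse | hse
  · have e1 : ε • y - s • z = (ε * a) • (x + s • z) := by
      have : x + ε • y - (x + s • z) = (ε * a) • (x + s • z) := by rw [hP]; module
      rw [← this]; module
    have n1 : ‖ε • y - s • z‖ = ε * a * ‖x + s • z‖ := by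
      rw [e1, norm_smul, Real.norm_of_nonneg hεa]
    have n2 : ε - s ≤ ‖ε • y - s • z‖ := by
      have := norm_sub_norm_le (ε • y) (s • z)
      rwa [norm_smul, norm_smul, hy, hz1, Real.norm_of_nonneg hε, Real.norm_of_nonneg hs0,
        mul_one, mul_one] at this
    have n3 : ‖x + ε • z‖ ≤ ‖x + s • z‖ + (ε - s) := by
      have e : x + ε • z = (x + s • z) + (ε - s) • z := by module
      rw [e]
      refine (norm_add_le _ _).trans ?_
      rw [norm_smul, hz1, Real.norm_of_nonneg (by linarith), mul_one]
    nlinarith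
  · refine (norm_add_smul_mono hf hx hfx hfz hε hse).trans ?_
    have := norm_nonneg (x + s • z)
    nlinarith

theorem zeta_step {f : X →L[ℝ] ℝ} (hf : ‖f‖ = 1) {p q : X} (hp : p ≠ 0) (hfp : f p = ‖p‖)
    (hfq : f p ≤ f q) {ρ : ℝ} (hρ : 0 < ρ) (h : ρ * ‖p‖ ≤ ‖q - p‖) :
    ‖p‖ * zetaConv X ρ ≤ ‖q‖ := by
  have hpp : 0 < ‖p‖ := norm_pos_iff.2 hp
  have hqp : 0 < ‖q - p‖ := lt_of_lt_of_le (by positivity) h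
  have k := zeta_key hf (x := ‖p‖⁻¹ • p) (y := ‖q - p‖⁻¹ • (q - p))
    (ε := ‖q - p‖ / ‖p‖) (ρ := ρ)
    (by rw [norm_smul, norm_inv, norm_norm, inv_mul_cancel₀ hpp.ne'])
    (by rw [norm_smul, norm_inv, norm_norm, inv_mul_cancel₀ hqp.ne'])
    (by rw [map_smul, hfp, smul_eq_mul, inv_mul_cancel₀ hpp.ne'])
    (by rw [map_smul, map_sub, smul_eq_mul]
        exact mul_nonneg (by positivity) (by linarith))
    hρ.le (by rwa [le_div_iff₀ hpp])
  have e : ‖p‖⁻¹ • p + (‖q - p‖ / ‖p‖) • ‖q - p‖⁻¹ • (q - p) = ‖p‖⁻¹ • q := by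
    rw [smul_smul]
    have : ‖q - p‖ / ‖p‖ * ‖q - p‖⁻¹ = ‖p‖⁻¹ := by field_simp
    rw [this]; module
  rw [e, norm_smul, norm_inv, norm_norm] at k
  calc ‖p‖ * zetaConv X ρ ≤ ‖p‖ * (‖p‖⁻¹ * ‖q‖) := by gcongr
    _ = ‖q‖ := by field_simp

noncomputable def minPt (C : Set X) : X :=
  if h : ∃ p ∈ C, ∀ q ∈ C, ‖p‖ ≤ ‖q‖ then h.choose else 0

theorem minPt_spec {C : Set X} (h : ∃ p ∈ C, ∀ q ∈ C, ‖p‖ ≤ ‖q‖) :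
    minPt C ∈ C ∧ ∀ q ∈ C, ‖minPt C‖ ≤ ‖q‖ := by
  unfold minPt
  rw [dif_pos h]
  exact h.choose_spec

def GoodT {A S : Type*} (G : S → A → Prop) (step : S → A → S) :
    (k : ℕ) → S → (Fin k → A) → Prop
  | 0, _, _ => True
  | k + 1, s, T => G s (T 0) ∧ GoodT G step k (step s (T 0)) (Fin.tail T)

theorem goodT_count {A S : Type*} (G : S → A → Prop) (step : S → A → S) :
    ∀ (k : ℕ) (F : Fin k → Finset A) (m : Fin k → ℕ)
      (_ : ∀ s i, m i ≤ ((F i).filter (fun a => G s a)).card) (s : S),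
      ∏ i, m i ≤ ((Fintype.piFinset F).filter (fun T => GoodT G step k s T)).card := by
  intro k
  induction k with
  | zero => intro F m _ s; simp [GoodT]
  | succ k ih =>
    intro F m hm s
    have h2 : ((F 0).filter (fun a => G s a)).card * ∏ i : Fin k, m i.succ ≤
        (((F 0).filter (fun a => G s a)).sigma (fun a =>
          (Fintype.piFinset (Fin.tail F)).filter
            (fun T => GoodT G step k (step s a) T))).card := by
      rw [Finset.card_sigma, ← smul_eq_mul]
      apply Finset.card_nsmul_le_sum
      intro a _
      exact ih (Fin.tail F) (fun i => m i.succ) (fun s i => hm s i.succ) _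
    rw [Fin.prod_univ_succ]
    refine (Nat.mul_le_mul_right _ (hm s 0)).trans (h2.trans ?_)
    apply Finset.card_le_card_of_injOn (fun z => (Fin.cons z.1 z.2 : Fin (k + 1) → A))
    · rintro ⟨a, T⟩ h
      simp only [Finset.coe_sigma, Set.mem_sigma_iff, Finset.mem_coe, Finset.mem_filter,
        Fintype.mem_piFinset] at h ⊢
      refine ⟨fun i => ?_, ?_⟩
      · refine Fin.cases ?_ (fun i => ?_) i
        · simpa using h.1.1
        · simpa [Fin.tail] using h.2.1 i
      · simpa [GoodT] using ⟨h.1.2, h.2.2⟩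
    · rintro ⟨a, T⟩ _ ⟨a', T'⟩ _ h
      have := Fin.cons_injective2 h
      obtain ⟨rfl, rfl⟩ := this
      rfl

theorem geo_induct [CompleteSpace X] (hX : UnifConvex X) {r : ℕ → ℝ} (hr : IsHellySeq X r)
    {c : ℝ} (hc : 0 < c) (q : X) :
    ∀ (k : ℕ) (j : ℕ) (_ : 1 ≤ j) (C : Set X) (_ : IsClosed C) (_ : Convex ℝ C) (_ : q ∈ C)
      (_ : c / r j < ‖minPt C‖) (T : Fin k → Set X) (_ : ∀ i, Convex ℝ (T i))
      (_ : ∀ i, q ∈ T i)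
      (_ : GoodT (fun C K => c < Metric.infDist (minPt C) K) (fun C K => C ∩ closure K) k C T),
      c / r (j + k) < ‖q‖ := by
  intro k
  induction k with
  | zero =>
    intro j hj C hcl hcv hq hlt T _ _ _
    exact hlt.trans_le ((minPt_spec (exists_min_norm hX hcl hcv ⟨q, hq⟩)).2 q hq)
  | succ k ih =>
    intro j hj C hcl hcv hq hlt T hT hqT hG
    obtain ⟨hG1, hG2⟩ := hG
    have hC' : IsClosed (C ∩ closure (T 0)) := hcl.inter isClosed_closure
    have hv' : Convex ℝ (C ∩ closure (T 0)) := hcv.inter (hT 0).closure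
    have hq' : q ∈ C ∩ closure (T 0) := ⟨hq, subset_closure (hqT 0)⟩
    have s1 := minPt_spec (exists_min_norm hX hcl hcv ⟨q, hq⟩)
    have s2 := minPt_spec (exists_min_norm hX hC' hv' ⟨q, hq'⟩)
    have rj := (hr.1 j hj).1
    have rj1 := (hr.1 (j + 1) (by omega)).1
    have hz := hr.2.2 j hj
    have := ih (j + 1) (by omega) _ hC' hv' hq' ?_ (Fin.tail T) (fun i => hT i.succ)
      (fun i => hqT i.succ) hG2
    · rwa [show j + (k + 1) = j + 1 + k by omega]
    set p := minPt C
    set p' := minPt (C ∩ closure (T 0))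
    have hpp' : ‖p‖ ≤ ‖p'‖ := s1.2 p' s2.1.1
    rcases lt_or_ge (c / r (j + 1)) ‖p‖ with h | h
    · exact h.trans_le hpp'
    have hp0 : p ≠ 0 := norm_pos_iff.1 (lt_trans (by positivity) hlt)
    obtain ⟨f, hf, hfp, hfC⟩ := exists_support hcv s1.1 hp0 s1.2
    have hd : c < ‖p' - p‖ := by
      have h1 := Metric.infDist_le_dist_of_mem (x := p) s2.1.2
      rw [Metric.infDist_closure, dist_comm, dist_eq_norm] at h1
      exact lt_of_lt_of_le hG1 h1
    have hst := zeta_step hf hp0 hfp (hfC p' s2.1.1) rj1 (by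
      rw [le_div_iff₀ rj1] at h
      linarith)
    rw [div_lt_iff₀ rj] at hlt
    rw [div_lt_iff₀ rj1]
    have : ‖p‖ * r j ≤ ‖p'‖ * r (j + 1) := by
      rw [← hz]
      calc ‖p‖ * (r (j + 1) * zetaConv X (r (j + 1)))
          = (‖p‖ * zetaConv X (r (j + 1))) * r (j + 1) := by ring
        _ ≤ _ := by gcongr
    linarith

theorem geo_main [CompleteSpace X] (hX : UnifConvex X) {r : ℕ → ℝ} (hr : IsHellySeq X r)
    {k : ℕ} (hk : 1 ≤ k) (q : X) (hq1 : ‖q‖ ≤ 1) (T : Fin k → Set X)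
    (hT : ∀ i, Convex ℝ (T i)) (hqT : ∀ i, q ∈ T i)
    (hG : GoodT (fun C K => r k < Metric.infDist (minPt C) K) (fun C K => C ∩ closure K) k
      Set.univ T) : False := by
  obtain ⟨k, rfl⟩ : ∃ n, k = n + 1 := ⟨k - 1, by omega⟩
  obtain ⟨hG1, hG2⟩ := hG
  have rk := (hr.1 (k + 1) (by omega)).1
  have h0 : minPt (Set.univ : Set X) = 0 := by
    have := (minPt_spec (C := (Set.univ : Set X)) ⟨0, trivial, by simp⟩).2 0 trivial
    simpa using this
  rw [h0] at hG1
  have hC' : IsClosed (Set.univ ∩ closure (T 0)) := isClosed_univ.inter isClosed_closure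
  have hv' : Convex ℝ (Set.univ ∩ closure (T 0)) := convex_univ.inter (hT 0).closure
  have hq' : q ∈ Set.univ ∩ closure (T 0) := ⟨trivial, subset_closure (hqT 0)⟩
  have s2 := minPt_spec (exists_min_norm hX hC' hv' ⟨q, hq'⟩)
  have := geo_induct hX hr rk q k 1 le_rfl _ hC' hv' hq' ?_ (Fin.tail T)
    (fun i => hT i.succ) (fun i => hqT i.succ) hG2
  · rw [add_comm 1 k, div_self rk.ne'] at this
    linarith
  · rw [hr.2.1, div_one]
    have h1 := Metric.infDist_le_dist_of_mem (x := (0 : X)) s2.1.2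
    rw [Metric.infDist_closure, dist_zero_left] at h1
    exact lt_of_lt_of_le hG1 h1

end Helpers

/-- **No-dimensional colorful fractional Helly theorem.** -/
theorem no_dim_colorful_fractional_helly
    {X : Type*} [NormedAddCommGroup X] [NormedSpace ℝ X] [CompleteSpace X]
    (hX : UnifConvex X) {r : ℕ → ℝ} (hr : IsHellySeq X r)
    {k : ℕ} (hk1 : 1 ≤ k)
    {α β : ℝ} (hα : α ∈ Set.Ioc (0 : ℝ) 1) (hβ : β = 1 - (1 - α) ^ ((1 : ℝ) / k))
    (F : Fin k → Finset (Set X)) (hne : ∀ i, (F i).Nonempty)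
    (hconv : ∀ i, ∀ K ∈ F i, Convex ℝ K)
    (hfrac : α * ∏ i : Fin k, ((F i).card : ℝ) ≤
      ((Fintype.piFinset F).filter
        (fun T : Fin k → Set X =>
          ∃ p ∈ Metric.closedBall (0 : X) 1, ∀ i : Fin k, p ∈ T i)).card) :
    ∃ x : X, ∃ i : Fin k, β * (F i).card ≤
      ((F i).filter (fun K => Metric.infDist x K ≤ r k)).card := by
  by_contra hcon
  push Not at hcon
  have hkpos : (k : ℝ) ≠ 0 := by positivity
  set c : ℝ := (1 - α) ^ ((1 : ℝ) / k) with hc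
  have h1α : 0 ≤ 1 - α := by linarith [hα.2]
  have hc0 : 0 ≤ c := Real.rpow_nonneg h1α _
  have hck : c ^ k = 1 - α := by
    rw [hc, one_div]
    exact Real.rpow_inv_natCast_pow h1α (by omega)
  set G : Set X → Set X → Prop := fun C K => r k < Metric.infDist (minPt C) K with hGdef
  set step : Set X → Set X → Set X := fun C K => C ∩ closure K with hstep
  have hfar : ∀ C i, c * (F i).card < ((F i).filter (fun K => G C K)).card := by
    intro C i
    have h1 := hcon (minPt C) i
    have h2 := Finset.card_filter_add_card_filter_not (s := F i)
      (fun K => Metric.infDist (minPt C) K ≤ r k)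
    simp only [not_le] at h2
    have h3 : (((F i).filter (fun K => Metric.infDist (minPt C) K ≤ r k)).card : ℝ) +
      ((F i).filter (fun K => G C K)).card = (F i).card := by exact_mod_cast h2
    rw [hβ] at h1
    linarith
  have hcount := goodT_count G step k F (fun i => ⌊c * (F i).card⌋₊ + 1)
    (fun C i => Nat.succ_le_of_lt ((Nat.floor_lt (by positivity)).2 (hfar C i))) Set.univ
  set good := (Fintype.piFinset F).filter (fun T => GoodT G step k Set.univ T) with hgood
  have hprod : ∏ i : Fin k, (c * ((F i).card : ℝ)) < (good.card : ℝ) := by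
    refine lt_of_lt_of_le ?_ (Nat.cast_le.2 hcount)
    push_cast
    haveI : Nonempty (Fin k) := ⟨⟨0, by omega⟩⟩
    rcases hc0.eq_or_lt with h0 | hcp
    · rw [← h0]
      simp only [zero_mul, Nat.floor_zero]
      rw [Finset.prod_const, Finset.card_univ, Fintype.card_fin, zero_pow (by omega)]
      simp
    · apply Finset.prod_lt_prod_of_nonempty
      · intro i _
        have : 0 < ((F i).card : ℝ) := by exact_mod_cast (hne i).card_pos
        positivity
      · intro i _
        exact Nat.lt_floor_add_one _
      · exact Finset.univ_nonempty
  rw [Finset.prod_mul_distrib, Finset.prod_const, Finset.card_univ, Fintype.card_fin, hck] at hprod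
  set meet := (Fintype.piFinset F).filter
        (fun T : Fin k → Set X =>
          ∃ p ∈ Metric.closedBall (0 : X) 1, ∀ i : Fin k, p ∈ T i) with hmeet
  have hdisj : Disjoint meet good := by
    rw [Finset.disjoint_left]
    intro T h1 h2
    rw [hmeet, Finset.mem_filter] at h1
    rw [hgood, Finset.mem_filter] at h2
    obtain ⟨hT, p, hp, hpT⟩ := h1
    rw [Fintype.mem_piFinset] at hT
    exact geo_main hX hr hk1 p (by simpa using hp) T (fun i => hconv i _ (hT i)) hpT h2.2
  have hle : meet.card + good.card ≤ ∏ i, (F i).card := by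
    rw [← Finset.card_union_of_disjoint hdisj, ← Fintype.card_piFinset]
    exact Finset.card_le_card (Finset.union_subset (Finset.filter_subset _ _)
      (Finset.filter_subset _ _))
  have hle' : (meet.card : ℝ) + good.card ≤ ∏ i, ((F i).card : ℝ) := by exact_mod_cast hle
  linarith
end

section
/- Let X be a uniformly convex real Banach space, let r be a Helly sequence for X, let k ≥ 1, and let 𝔽_1, …, 𝔽_k be finite nonempty families of convex subsets of X. If every rainbow k-tuple (K_1, …, K_k) ∈ 𝔽_1 × ⋯ × 𝔽_k is such that ⋂_{i=1}^{k} K_i contains a point of the closed unit ball of X, then there exist x ∈ X and i ∈ {1,…,k} such that every member K of 𝔽_i satisfies dist(x, K) ≤ r_k. -/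
open scoped Classical

section helpers
variable {X : Type*} [NormedAddCommGroup X] [NormedSpace ℝ X]

lemma hh_mono (x z : X) (h : ‖x‖ ≤ ‖x + z‖) (θ : ℝ) (h0 : 0 ≤ θ) (h1 : θ ≤ 1) :
    ‖x + θ • z‖ ≤ ‖x + z‖ := by
  have e : x + θ • z = θ • (x + z) + (1 - θ) • x := by module
  calc ‖x + θ • z‖ = ‖θ • (x + z) + (1 - θ) • x‖ := by rw [e]
    _ ≤ ‖θ • (x + z)‖ + ‖(1 - θ) • x‖ := norm_add_le _ _
    _ = θ * ‖x + z‖ + (1 - θ) * ‖x‖ := by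
      rw [norm_smul, norm_smul, Real.norm_of_nonneg h0, Real.norm_of_nonneg (by linarith)]
    _ ≤ ‖x + z‖ := by nlinarith

lemma hh_ge (x z : X) (f : X →L[ℝ] ℝ) (hf : f ≠ 0) (hfx : f x = ‖f‖ * ‖x‖) (hz : 0 ≤ f z) :
    ‖x‖ ≤ ‖x + z‖ := by
  have h1 : f (x + z) ≤ ‖f‖ * ‖x + z‖ := (le_abs_self _).trans (f.le_opNorm _)
  have h2 : 0 < ‖f‖ := norm_pos_iff.2 hf
  rw [map_add, hfx] at h1
  exact le_of_mul_le_mul_left (by linarith) h2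

lemma hh_zeta_le (s : ℝ) (x y : X) (hx : ‖x‖ = 1) (hy : ‖y‖ = 1) (h : QuasiOrth y x) :
    zetaConv X s ≤ ‖x + s • y‖ := by
  apply csInf_le
  · exact ⟨0, by rintro _ ⟨x, y, _, _, _, rfl⟩; positivity⟩
  · exact ⟨x, y, hx, hy, h, rfl⟩

lemma hh_zeta_le_add (s : ℝ) (hs : 0 ≤ s) : zetaConv X s ≤ 1 + s := by
  by_cases hne : ∃ x y : X, ‖x‖ = 1 ∧ ‖y‖ = 1 ∧ QuasiOrth y x
  · obtain ⟨x, y, hx, hy, h⟩ := hne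
    refine (hh_zeta_le s x y hx hy h).trans ((norm_add_le _ _).trans ?_)
    rw [norm_smul, hx, hy, Real.norm_of_nonneg hs]; simp
  · have : {t : ℝ | ∃ x y : X, ‖x‖ = 1 ∧ ‖y‖ = 1 ∧ QuasiOrth y x ∧ t = ‖x + s • y‖} = ∅ := by
      ext t
      simp only [Set.mem_ofPred_eq, Set.mem_empty_iff_false, iff_false]
      rintro ⟨x, y, hx, hy, h, _⟩
      exact hne ⟨x, y, hx, hy, h⟩
    rw [zetaConv, this, Real.sInf_empty]; linarith

lemma hh_quasi_ge (s : ℝ) (x y : X) (h : QuasiOrth y x) : ‖x‖ ≤ ‖x + s • y‖ := by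
  obtain ⟨f, hf, hfx, hfy⟩ := h
  exact hh_ge x _ f hf hfx (by simp [hfy])

lemma hh_zeta_ne {s : ℝ} (hs : zetaConv X s ≠ 0) (t : ℝ) :
    {t' : ℝ | ∃ x y : X, ‖x‖ = 1 ∧ ‖y‖ = 1 ∧ QuasiOrth y x ∧ t' = ‖x + t • y‖}.Nonempty := by
  by_contra hne
  apply hs
  have : {t : ℝ | ∃ x y : X, ‖x‖ = 1 ∧ ‖y‖ = 1 ∧ QuasiOrth y x ∧ t = ‖x + s • y‖} = ∅ := by
    ext t'
    simp only [Set.mem_ofPred_eq, Set.mem_empty_iff_false, iff_false]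
    rintro ⟨x, y, hx, hy, h, _⟩
    exact hne ⟨_, x, y, hx, hy, h, rfl⟩
  rw [zetaConv, this, Real.sInf_empty]

lemma hh_one_le_zeta {s : ℝ} (hs : zetaConv X s ≠ 0) : 1 ≤ zetaConv X s := by
  apply le_csInf (hh_zeta_ne hs s)
  rintro _ ⟨x, y, hx, hy, h, rfl⟩
  exact hx ▸ hh_quasi_ge s x y h

lemma hh_zeta_mono {u s t : ℝ} (hu : zetaConv X u ≠ 0) (h0 : 0 < s) (hst : s ≤ t) :
    zetaConv X s ≤ zetaConv X t := by
  apply le_csInf (hh_zeta_ne hu t)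
  rintro _ ⟨x, y, hx, hy, h, rfl⟩
  have ht : 0 < t := h0.trans_le hst
  refine (hh_zeta_le s x y hx hy h).trans ?_
  have := hh_mono x (t • y) (hh_quasi_ge t x y h) (s / t) (by positivity) ((div_le_one ht).2 hst)
  rwa [smul_smul, div_mul_cancel₀ _ ht.ne'] at this

lemma hh_zeta_div {u s t : ℝ} (hu : zetaConv X u ≠ 0) (h0 : 0 < s) (hst : s ≤ t) (h1 : t ≤ 1) :
    s * zetaConv X t ≤ t * zetaConv X s := by
  have ht : 0 < t := h0.trans_le hst
  rw [← div_le_iff₀' ht]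
  apply le_csInf (hh_zeta_ne hu s)
  rintro _ ⟨x, y, hx, hy, h, rfl⟩
  rw [div_le_iff₀' ht]
  have a := hh_zeta_le t x y hx hy h
  have b : ‖x + t • y‖ ≤ ‖x + s • y‖ + (t - s) := by
    have e : x + t • y = (x + s • y) + (t - s) • y := by module
    rw [e]
    refine (norm_add_le _ _).trans ?_
    rw [norm_smul (t - s), hy, Real.norm_of_nonneg (by linarith)]; simp
  have c := hh_quasi_ge s x y h
  rw [hx] at c
  nlinarith [mul_le_mul_of_nonneg_left (a.trans b) h0.le,
    mul_nonneg (sub_nonneg.2 hst) (sub_nonneg.2 (hst.trans h1 |>.trans c))]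

lemma hh_keyEq (x z : X) (hx : ‖x‖ = 1) (f : X →L[ℝ] ℝ) (hf : f ≠ 0) (hfx : f x = ‖f‖ * ‖x‖)
    (hz : 0 ≤ f z) (s : ℝ) (hs : 0 < s) (hzs : ‖z‖ = s) : zetaConv X s ≤ ‖x + z‖ := by
  have hfp : 0 < ‖f‖ := norm_pos_iff.2 hf
  have hfx' : f x = ‖f‖ := by rw [hfx, hx, mul_one]
  have hxz := hh_ge x z f hf hfx hz
  obtain ⟨α, hα⟩ : ∃ α, α = f z / ‖f‖ := ⟨_, rfl⟩
  have hα0 : 0 ≤ α := by rw [hα]; positivity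
  obtain ⟨w, hw⟩ : ∃ w, w = z - α • x := ⟨_, rfl⟩
  have hfw : f w = 0 := by
    rw [hw, map_sub, map_smul, hfx', hα, smul_eq_mul, div_mul_cancel₀ _ hfp.ne', sub_self]
  have hzw : z = α • x + w := by rw [hw]; module
  by_cases hw0 : w = 0
  · rw [hw0, add_zero] at hzw
    have hαs : α = s := by
      rw [← hzs, hzw, norm_smul, hx, Real.norm_of_nonneg hα0, mul_one]
    have : x + z = (1 + s) • x := by rw [hzw, hαs]; module
    rw [this, norm_smul, hx, mul_one, Real.norm_of_nonneg (by linarith)]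
    exact hh_zeta_le_add s hs.le
  have hwn : 0 < ‖w‖ := norm_pos_iff.2 hw0
  obtain ⟨y, hy⟩ : ∃ y, y = ‖w‖⁻¹ • w := ⟨_, rfl⟩
  have hyn : ‖y‖ = 1 := by rw [hy, norm_smul, norm_inv, norm_norm, inv_mul_cancel₀ hwn.ne']
  have hwy : w = ‖w‖ • y := by rw [hy, smul_smul, mul_inv_cancel₀ hwn.ne', one_smul]
  have hq : QuasiOrth y x := ⟨f, hf, hfx, by rw [hy, map_smul, hfw, smul_zero]⟩
  refine (hh_zeta_le s x y hx hyn hq).trans ?_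
  -- z = α x + b y
  obtain ⟨b, hb⟩ : ∃ b, b = ‖w‖ := ⟨_, rfl⟩
  rw [← hb] at hwy hwn
  obtain ⟨τ, hτ⟩ : ∃ τ : ℝ, τ = (1 + α)⁻¹ := ⟨_, rfl⟩
  have hτ0 : 0 < τ := by rw [hτ]; positivity
  have hτ1 : τ ≤ 1 := by rw [hτ]; exact inv_le_one_of_one_le₀ (by linarith)
  have hτα : τ * (1 + α) = 1 := by rw [hτ]; exact inv_mul_cancel₀ (by linarith)
  have e1 : x + (τ * b) • y = τ • (x + z) := by
    have : τ • (x + z) = (τ * (1 + α)) • x + (τ * b) • y := by rw [hzw, hwy]; module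
    rw [this, hτα, one_smul]
  have n1 : ‖x + (τ * b) • y‖ = τ * ‖x + z‖ := by
    rw [e1, norm_smul, Real.norm_of_nonneg hτ0.le]
  have hbp : 0 < τ * b := by positivity
  rcases le_total (τ * b) s with hle | hle
  · have n2 : ‖x + s • y‖ ≤ τ * ‖x + z‖ + (s - τ * b) := by
      have e : x + s • y = (x + (τ * b) • y) + (s - τ * b) • y := by module
      rw [e]
      refine (norm_add_le _ _).trans ?_
      rw [n1, norm_smul, hyn, Real.norm_of_nonneg (by linarith), mul_one]
    have n3 : s ≤ (1 - τ) * ‖x + z‖ + τ * b := by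
      have e : z = (1 - τ) • (x + z) + (τ * b) • y := by
        have : (τ * b) • y = τ • (x + z) - x := by rw [← e1]; module
        rw [this]; module
      calc s = ‖(1 - τ) • (x + z) + (τ * b) • y‖ := by rw [← e, hzs]
        _ ≤ ‖(1 - τ) • (x + z)‖ + ‖(τ * b) • y‖ := norm_add_le _ _
        _ = _ := by
          rw [norm_smul, norm_smul, hyn, Real.norm_of_nonneg (by linarith),
            Real.norm_of_nonneg hbp.le, mul_one]
    linarith
  · have := hh_mono x ((τ * b) • y) (hh_quasi_ge _ x y hq) (s / (τ * b)) (by positivity)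
      ((div_le_one hbp).2 hle)
    rw [smul_smul, div_mul_cancel₀ _ hbp.ne', n1] at this
    refine this.trans ?_
    nlinarith [norm_nonneg (x + z)]

lemma hh_key (x z : X) (hx : ‖x‖ = 1) (f : X →L[ℝ] ℝ) (hf : f ≠ 0) (hfx : f x = ‖f‖ * ‖x‖)
    (hz : 0 ≤ f z) (s : ℝ) (hs : 0 < s) (hzs : s ≤ ‖z‖) : zetaConv X s ≤ ‖x + z‖ := by
  have hzp : 0 < ‖z‖ := hs.trans_le hzs
  have h := hh_mono x z (hh_ge x z f hf hfx hz) (s / ‖z‖) (by positivity) ((div_le_one hzp).2 hzs)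
  refine le_trans (hh_keyEq x _ hx f hf hfx ?_ s hs ?_) h
  · rw [map_smul]; exact smul_nonneg (by positivity) hz
  · rw [norm_smul, Real.norm_of_nonneg (by positivity), div_mul_cancel₀ _ hzp.ne']

lemma hh_support (C : Set X) (hC : Convex ℝ C) (p : X) (hp : p ∈ C) (hp0 : p ≠ 0)
    (hmin : ∀ c ∈ C, ‖p‖ ≤ ‖c‖) :
    ∃ f : X →L[ℝ] ℝ, f ≠ 0 ∧ f p = ‖f‖ * ‖p‖ ∧ ∀ c ∈ C, f p ≤ f c := by
  have hpn : 0 < ‖p‖ := norm_pos_iff.2 hp0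
  obtain ⟨f, u, h1, h2⟩ := geometric_hahn_banach_open (convex_ball (0 : X) ‖p‖)
    Metric.isOpen_ball hC (by
      rw [Set.disjoint_left]
      intro a ha hc
      rw [mem_ball_zero_iff] at ha
      exact absurd (hmin a hc) (not_le.2 ha))
  have hu : 0 < u := by simpa using h1 0 (by simpa using hp0)
  have hn : ‖f‖ ≤ u / ‖p‖ := by
    refine f.opNorm_le_bound (by positivity) fun v => ?_
    have key : ∀ v : X, f v ≤ u / ‖p‖ * ‖v‖ := by
      intro v
      by_contra! hlt
      have hfv : 0 < f v := lt_of_le_of_lt (by positivity) hlt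
      have hm : (u / f v) • v ∈ Metric.ball (0 : X) ‖p‖ := by
        rw [mem_ball_zero_iff, norm_smul, Real.norm_of_nonneg (by positivity),
          div_mul_eq_mul_div, div_lt_iff₀ hfv]
        rw [div_mul_eq_mul_div, div_lt_iff₀ hpn] at hlt
        linarith
      have := h1 _ hm
      rw [map_smul, smul_eq_mul, div_mul_cancel₀ _ hfv.ne'] at this
      exact lt_irrefl _ this
    rw [Real.norm_eq_abs, abs_le]
    have a := key (-v)
    rw [map_neg, norm_neg] at a
    exact ⟨by linarith, key v⟩
  rw [le_div_iff₀ hpn] at hn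
  have hle : f p ≤ ‖f‖ * ‖p‖ := (le_abs_self _).trans (f.le_opNorm _)
  refine ⟨f, ?_, le_antisymm hle (hn.trans (h2 p hp)), fun c hc => (hle.trans hn).trans (h2 c hc)⟩
  rintro rfl
  have := h2 p hp
  simp at this
  linarith

lemma hh_step {r : ℕ → ℝ} (hr : IsHellySeq X r) (j : ℕ) (hj : 1 ≤ j) (R : ℝ) (hR : 0 < R)
    (C : Set X) (hC : Convex ℝ C) (p : X) (hp : p ∈ C)
    (hmin : ∀ c ∈ C, ‖p‖ ≤ ‖c‖) (hpj : R < ‖p‖ * r j) (c : X) (hc : c ∈ C) (hcp : R < ‖c - p‖) :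
    R < ‖c‖ * r (j + 1) := by
  obtain ⟨hr1, -, hr3⟩ := hr
  obtain ⟨a0, a1⟩ := hr1 j hj
  obtain ⟨b0, b1⟩ := hr1 (j + 1) (by omega)
  have hz := hr3 j hj
  have hzne : zetaConv X (r (j + 1)) ≠ 0 := by
    intro h; rw [h] at hz; simp at hz; linarith
  have hz1 := hh_one_le_zeta hzne
  have hdec : r (j + 1) ≤ r j := by nlinarith
  have hp0 : p ≠ 0 := by rintro rfl; simp at hpj; linarith
  have hpn : 0 < ‖p‖ := norm_pos_iff.2 hp0
  obtain ⟨f, hf, hfp, hfc⟩ := hh_support C hC p hp hp0 hmin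
  obtain ⟨ρ, hρ1, hρ2⟩ := exists_between (lt_min hpj hcp)
  obtain ⟨hρ3, hρ4⟩ := lt_min_iff.1 hρ2
  have hρ : 0 < ρ := hR.trans hρ1
  have hs : ρ / ‖p‖ ≤ r j := by rw [div_le_iff₀ hpn]; linarith
  have hs0 : 0 < ρ / ‖p‖ := by positivity
  have k1 := hh_key (‖p‖⁻¹ • p) (‖p‖⁻¹ • (c - p)) (by
      rw [norm_smul, norm_inv, norm_norm, inv_mul_cancel₀ hpn.ne']) f hf (by
      rw [map_smul, hfp, norm_smul, norm_inv, norm_norm, smul_eq_mul]; ring) (by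
      rw [map_smul, map_sub]
      exact smul_nonneg (by positivity) (sub_nonneg.2 (hfc c hc))) (ρ / ‖p‖) hs0 (by
      rw [norm_smul, norm_inv, norm_norm, inv_mul_eq_div]; gcongr)
  have e : ‖p‖⁻¹ • p + ‖p‖⁻¹ • (c - p) = ‖p‖⁻¹ • c := by module
  rw [e, norm_smul, norm_inv, norm_norm, inv_mul_eq_div] at k1
  have k2 := hh_zeta_div (X := X) hzne hs0 hs a1
  have k3 := hh_zeta_mono (X := X) hzne b0 hdec
  -- ρ/‖p‖ * (r j / r (j+1)) ≤ r j * (‖c‖/‖p‖)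
  have k4 : ρ / ‖p‖ * zetaConv X (r (j + 1)) ≤ r j * (‖c‖ / ‖p‖) :=
    (mul_le_mul_of_nonneg_left k3 hs0.le).trans (k2.trans (mul_le_mul_of_nonneg_left k1 a0.le))
  have k5 : ρ * zetaConv X (r (j + 1)) ≤ r j * ‖c‖ := by
    rw [div_mul_eq_mul_div, mul_div_assoc', div_le_div_iff_of_pos_right hpn] at k4
    exact k4
  rw [← hz] at k5
  have hzp : 0 < zetaConv X (r (j + 1)) := by linarith
  have k6 : ρ ≤ ‖c‖ * r (j + 1) := by
    refine le_of_mul_le_mul_right ?_ hzp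
    linarith
  linarith

end helpers

/-- **No-dimensional colorful Helly theorem in uniformly convex Banach spaces.** -/
theorem no_dim_colorful_helly
    {X : Type*} [NormedAddCommGroup X] [NormedSpace ℝ X] [CompleteSpace X]
    (hX : UnifConvex X) {r : ℕ → ℝ} (hr : IsHellySeq X r)
    {k : ℕ} (hk1 : 1 ≤ k)
    (F : Fin k → Finset (Set X)) (hne : ∀ i, (F i).Nonempty)
    (hconv : ∀ i, ∀ K ∈ F i, Convex ℝ K)
    (hrainbow : ∀ T : Fin k → Set X, (∀ i, T i ∈ F i) →
      ∃ p ∈ Metric.closedBall (0 : X) 1, ∀ i : Fin k, p ∈ T i) :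
    ∃ x : X, ∃ i : Fin k, ∀ K ∈ F i, Metric.infDist x K ≤ r k := by
  by_contra! hcon
  choose! P hPb hP using hrainbow
  have hRpos : 0 < r k := (hr.1 k hk1).1
  let C : Fin k → Set X → Set X := fun i K =>
    convexHull ℝ (P '' {T | (∀ l, T l ∈ F l) ∧ T i = K})
  have hfin : {T : Fin k → Set X | ∀ l, T l ∈ F l}.Finite :=
    Set.Finite.pi' fun l => (F l).finite_toSet
  have hCcomp : ∀ i K, IsCompact (C i K) := fun i K =>
    Set.Finite.isCompact_convexHull ℝ (Set.Finite.image P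
      (hfin.subset (t := {T | (∀ l, T l ∈ F l) ∧ T i = K}) (fun T hT => hT.1)))
  have hCconv : ∀ i K, Convex ℝ (C i K) := fun i K => convex_convexHull ℝ _
  have hCsub : ∀ i, ∀ K ∈ F i, C i K ⊆ K := by
    intro i K hK
    refine convexHull_min ?_ (hconv i K hK)
    rintro _ ⟨T, ⟨hT, rfl⟩, rfl⟩
    exact hP T hT i
  have hPC : ∀ T : Fin k → Set X, (∀ l, T l ∈ F l) → ∀ i, P T ∈ C i (T i) := fun T hT i =>
    subset_convexHull ℝ _ ⟨T, ⟨hT, rfl⟩, rfl⟩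
  have main : ∀ j : ℕ, 1 ≤ j → j ≤ k → ∃ T : Fin k → Set X, (∀ l, T l ∈ F l) ∧
      ∀ c, (∀ i : Fin k, i.val < j → c ∈ C i (T i)) → r k < ‖c‖ * r j := by
    intro j hj
    induction j, hj using Nat.le_induction with
    | base =>
      intro _
      choose T0 hT0 using hne
      obtain ⟨K, hK, hlt⟩ := hcon 0 ⟨0, hk1⟩
      refine ⟨Function.update T0 ⟨0, hk1⟩ K, ?_, ?_⟩
      · intro l
        by_cases h : l = ⟨0, hk1⟩
        · subst h; simpa using hK
        · simpa [Function.update_of_ne h] using hT0 l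
      · intro c hc
        have h := hc ⟨0, hk1⟩ (by simp)
        rw [Function.update_self] at h
        have := Metric.infDist_le_dist_of_mem (x := (0 : X)) (hCsub _ _ hK h)
        rw [dist_zero_left] at this
        rw [hr.2.1, mul_one]
        linarith
    | succ j hj ih =>
      intro hjk
      obtain ⟨T, hT, hTc⟩ := ih (by omega)
      let S : Set X := ⋂ i : {i : Fin k // i.val < j}, C i.1 (T i.1)
      have hmemS : ∀ c, c ∈ S ↔ ∀ i : Fin k, i.val < j → c ∈ C i (T i) := by
        intro c; simp [S]
      have hSconv : Convex ℝ S := convex_iInter fun i => hCconv _ _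
      have hScomp : IsCompact S := by
        refine (hCcomp ⟨0, hk1⟩ (T ⟨0, hk1⟩)).of_isClosed_subset
          (isClosed_iInter fun i => (hCcomp _ _).isClosed) ?_
        intro c hc
        exact (hmemS c).1 hc _ (by simp; omega)
      have hSne : S.Nonempty := ⟨P T, (hmemS _).2 fun i _ => hPC T hT i⟩
      obtain ⟨p, hpS, hpmin⟩ := hScomp.exists_isMinOn hSne continuous_norm.continuousOn
      have hjk' : j < k := by omega
      obtain ⟨K, hK, hlt⟩ := hcon p ⟨j, hjk'⟩
      refine ⟨Function.update T ⟨j, hjk'⟩ K, ?_, ?_⟩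
      · intro l
        by_cases h : l = ⟨j, hjk'⟩
        · subst h; simpa using hK
        · simpa [Function.update_of_ne h] using hT l
      · intro c hc
        have hcS : c ∈ S := by
          rw [hmemS]
          intro i hi
          have := hc i (by omega)
          rwa [Function.update_of_ne (by rintro rfl; simp at hi)] at this
        have h := hc ⟨j, hjk'⟩ (by simp)
        rw [Function.update_self] at h
        have hd := Metric.infDist_le_dist_of_mem (x := p) (hCsub _ _ hK h)
        rw [dist_comm, dist_eq_norm] at hd
        exact hh_step hr j hj (r k) hRpos S hSconv p hpS (fun c hc => hpmin hc)
          (hTc p ((hmemS p).1 hpS)) c hcS (hlt.trans_le hd)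
  obtain ⟨T, hT, hTc⟩ := main k hk1 le_rfl
  have h1 := hTc (P T) fun i _ => hPC T hT i
  have h2 := hPb T hT
  rw [mem_closedBall_zero_iff] at h2
  nlinarith
end

section
/- Let X be a uniformly convex real Banach space, let r be a Helly sequence for X, and let k ≥ 1. Let P be a finite set of n points contained in the closed unit ball of X. Then there exists a point x ∈ X such that every closed half-space H⁺ = {y ∈ X : f(y) ≥ c} (with f a nonzero continuous linear functional on X and c ∈ ℝ) which contains the closed ball of radius r_k centered at x contains at least n/k points of P. -/
open scoped Classical

lemma ndc_zeta_le {X : Type*} [NormedAddCommGroup X] [NormedSpace ℝ X] (ε : ℝ) {x y : X}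
    (hx : ‖x‖ = 1) (hy : ‖y‖ = 1) (h : QuasiOrth y x) : zetaConv X ε ≤ ‖x + ε • y‖ := by
  unfold zetaConv
  apply csInf_le
  · refine ⟨0, ?_⟩
    rintro t ⟨x, y, -, -, -, rfl⟩
    exact norm_nonneg _
  · exact ⟨x, y, hx, hy, h, rfl⟩

/-- monotonicity in the orthogonal direction -/
lemma ndc_mono {X : Type*} [NormedAddCommGroup X] [NormedSpace ℝ X] {x y : X}
    (hx : ‖x‖ = 1) (f : X →L[ℝ] ℝ) (hf : ‖f‖ = 1) (hfx : f x = 1) (hfy : f y = 0)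
    {s t : ℝ} (hs : 0 ≤ s) (hst : s ≤ t) : ‖x + s • y‖ ≤ ‖x + t • y‖ := by
  have h1 : 1 ≤ ‖x + t • y‖ := by
    have := f.le_opNorm (x + t • y)
    simp only [map_add, map_smul, hfx, hfy, hf] at this
    simpa using this
  rcases eq_or_lt_of_le (hs.trans hst) with ht | ht
  · have : s = t := by linarith
    rw [this]
  have e : x + s • y = (1 - s / t) • x + (s / t) • (x + t • y) := by
    have : s / t * t = s := by field_simp
    rw [smul_add, smul_smul, this, sub_smul, one_smul]; abel
  have h0 : 0 ≤ s / t := by positivity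
  have h2 : s / t ≤ 1 := (div_le_one ht).2 hst
  rw [e]
  calc _ ≤ ‖(1 - s / t) • x‖ + ‖(s / t) • (x + t • y)‖ := norm_add_le _ _
    _ = (1 - s / t) + (s / t) * ‖x + t • y‖ := by
      rw [norm_smul, norm_smul, Real.norm_of_nonneg h0, Real.norm_of_nonneg (by linarith), hx]
      ring
    _ ≤ _ := by nlinarith

lemma ndc_key1 {X : Type*} [NormedAddCommGroup X] [NormedSpace ℝ X] {x w : X}
    (hx : ‖x‖ = 1) (f : X →L[ℝ] ℝ) (hf : ‖f‖ = 1) (hfx : f x = 1) (hfw : 0 ≤ f w)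
    {ε : ℝ} (hε : 0 ≤ ε) (hw : ε ≤ ‖w‖) : zetaConv X ε ≤ ‖x + w‖ := by
  have hf0 : f ≠ 0 := by rintro rfl; simp at hf
  set a := f w with ha
  set v := w - a • x with hv
  have hfv : f v = 0 := by simp [hv, hfx, ← ha]
  have hwv : w = a • x + v := by rw [hv]; abel
  by_cases hv0 : v = 0
  · have hwa : ‖w‖ = a := by
      rw [hwv, hv0, add_zero, norm_smul, hx, Real.norm_of_nonneg hfw, mul_one]
    have hxw : ‖x + w‖ = 1 + a := by
      have : x + w = (1 + a) • x := by rw [hwv, hv0, add_smul, one_smul, add_zero]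
      rw [this, norm_smul, hx, Real.norm_of_nonneg (by linarith), mul_one]
    rw [hxw]
    by_cases hne : ∃ x y : X, ‖x‖ = 1 ∧ ‖y‖ = 1 ∧ QuasiOrth y x
    · obtain ⟨x', y', h1, h2, h3⟩ := hne
      refine (ndc_zeta_le ε h1 h2 h3).trans ?_
      refine (norm_add_le _ _).trans ?_
      rw [norm_smul, h1, h2, Real.norm_of_nonneg hε]; linarith
    · have : zetaConv X ε = 0 := by
        unfold zetaConv
        convert Real.sInf_empty
        ext t
        simp only [Set.mem_ofPred_eq, Set.mem_empty_iff_false, iff_false]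
        rintro ⟨x, y, h1, h2, h3, -⟩
        exact hne ⟨x, y, h1, h2, h3⟩
      rw [this]; linarith
  have hvp : 0 < ‖v‖ := norm_pos_iff.2 hv0
  set y := ‖v‖⁻¹ • v with hy
  have hyn : ‖y‖ = 1 := by
    rw [hy, norm_smul, norm_inv, norm_norm]; field_simp
  have hfy : f y = 0 := by simp [hy, hfv]
  have hvy : v = ‖v‖ • y := by rw [hy, smul_smul, mul_inv_cancel₀ hvp.ne', one_smul]
  refine (ndc_zeta_le ε hx hyn ⟨f, hf0, by rw [hf, hx, hfx]; norm_num, hfy⟩).trans ?_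
  set b := ‖v‖ with hb
  set c := b / (1 + a) with hc
  have h1a : 0 < 1 + a := by linarith
  have hbc : (1 + a) * c = b := by rw [hc]; field_simp
  have hc0 : 0 ≤ c := by positivity
  have hxw : x + w = (1 + a) • (x + c • y) := by
    rw [hwv, hvy, ← hbc]; module
  have hz : ‖x + w‖ = (1 + a) * ‖x + c • y‖ := by
    rw [hxw, norm_smul, Real.norm_of_nonneg h1a.le]
  rcases le_or_gt ε c with h | h
  · have := ndc_mono hx f hf hfx hfy hε h
    rw [hz]
    nlinarith [norm_nonneg (x + c • y)]
  · -- crossing diagonals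
    have t1 : ‖x + ε • y‖ ≤ ‖x + c • y‖ + (ε - c) := by
      have : x + ε • y = (x + c • y) + (ε - c) • y := by module
      rw [this]
      refine (norm_add_le _ _).trans ?_
      rw [norm_smul, hyn, Real.norm_of_nonneg (by linarith), mul_one]
    have t2 : ‖w‖ ≤ a * ‖x + c • y‖ + c := by
      have : w = a • (x + c • y) + c • y := by
        rw [hwv, hvy, ← hbc]; module
      rw [this]
      refine (norm_add_le _ _).trans ?_
      rw [norm_smul, norm_smul, hyn, Real.norm_of_nonneg hfw, Real.norm_of_nonneg hc0, mul_one]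
    rw [hz]
    linarith

lemma ndc_key2 {X : Type*} [NormedAddCommGroup X] [NormedSpace ℝ X] {C : Set X}
    (hC : Convex ℝ C) {q : X} (hq : q ∈ C) (hq0 : 0 < ‖q‖) (hmin : ∀ p ∈ C, ‖q‖ ≤ ‖p‖)
    {p : X} (hp : p ∈ C) {ε : ℝ} (hε : 0 ≤ ε) (hd : ε * ‖q‖ ≤ ‖p - q‖) :
    ‖q‖ * zetaConv X ε ≤ ‖p‖ := by
  obtain ⟨g, u, hg1, hg2⟩ := geometric_hahn_banach_open (convex_ball (0 : X) ‖q‖)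
    Metric.isOpen_ball hC (by
      rw [Set.disjoint_left]
      intro z hz hzC
      have := hmin z hzC
      simp at hz; linarith)
  have hcl : ∀ z : X, ‖z‖ ≤ ‖q‖ → g z ≤ u := by
    intro z hz
    have : z ∈ closure (Metric.ball (0 : X) ‖q‖) := by
      rw [closure_ball _ hq0.ne']; simpa using hz
    exact closure_minimal (fun z hz => (hg1 z hz).le)
      (isClosed_le g.continuous continuous_const) this
  have hu : 0 < u := by simpa using hg1 0 (by simpa using hq0)
  have hgq : g q = u := le_antisymm (hcl q le_rfl) (hg2 q hq)
  have hnorm : ‖g‖ = u / ‖q‖ := by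
    apply le_antisymm
    · refine g.opNorm_le_bound (by positivity) fun z => ?_
      rcases eq_or_ne z 0 with rfl | hz
      · simp
      have hzp : 0 < ‖z‖ := norm_pos_iff.2 hz
      have hn : ‖(‖q‖ / ‖z‖) • z‖ ≤ ‖q‖ := by
        rw [norm_smul, norm_div, norm_norm, norm_norm]; field_simp; exact le_rfl
      have h1 := hcl _ hn
      have h2 := hcl (-((‖q‖ / ‖z‖) • z)) (by rwa [norm_neg])
      simp only [map_neg, map_smul, smul_eq_mul] at h1 h2
      have e : g z = (‖q‖ / ‖z‖ * g z) * (‖z‖ / ‖q‖) := by field_simp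
      have e2 : u / ‖q‖ * ‖z‖ = u * (‖z‖ / ‖q‖) := by ring
      have hpos : 0 < ‖z‖ / ‖q‖ := by positivity
      rw [Real.norm_eq_abs, e2, e, abs_le]
      constructor <;> nlinarith
    · rw [div_le_iff₀ hq0, ← hgq]
      exact (le_abs_self _).trans (g.le_opNorm q)
  have hgp : 0 < ‖g‖ := by rw [hnorm]; positivity
  have hu2 : u = ‖g‖ * ‖q‖ := by rw [hnorm]; field_simp
  have hi : 0 ≤ ‖q‖⁻¹ := by positivity
  have key := ndc_key1 (x := ‖q‖⁻¹ • q) (w := ‖q‖⁻¹ • (p - q)) (ε := ε)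
    (by rw [norm_smul, norm_inv, norm_norm]; field_simp) (‖g‖⁻¹ • g)
    (by rw [norm_smul, norm_inv, norm_norm]; field_simp)
    (by simp [hgq, hu2]; field_simp)
    (by
      have := hg2 p hp
      have h3 : 0 ≤ g p - g q := by linarith
      have e : (‖g‖⁻¹ • g) (‖q‖⁻¹ • (p - q)) = ‖g‖⁻¹ * (‖q‖⁻¹ * (g p - g q)) := by
        simp
        ring
      rw [e]
      exact mul_nonneg (by positivity) (mul_nonneg hi h3))
    hε
    (by
      rw [norm_smul, norm_inv, norm_norm, inv_mul_eq_div, le_div_iff₀ hq0]; exact hd)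
  rw [← smul_add, add_sub_cancel, norm_smul, norm_inv, norm_norm, inv_mul_eq_div,
    le_div_iff₀ hq0] at key
  linarith

/-- **No-dimensional centerpoint theorem in uniformly convex Banach spaces.** -/
theorem no_dim_centerpoint
    {X : Type*} [NormedAddCommGroup X] [NormedSpace ℝ X] [CompleteSpace X]
    (hX : UnifConvex X) {r : ℕ → ℝ} (hr : IsHellySeq X r)
    {k : ℕ} (hk1 : 1 ≤ k)
    {n : ℕ} (P : Finset X) (hPcard : P.card = n)
    (hP : ∀ p ∈ P, p ∈ Metric.closedBall (0 : X) 1) :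
    ∃ x : X, ∀ f : X →L[ℝ] ℝ, f ≠ 0 → ∀ c : ℝ,
      Metric.closedBall x (r k) ⊆ {y : X | c ≤ f y} →
      (n : ℝ) / k ≤ (P.filter (fun p => c ≤ f p)).card := by
  by_contra hcon
  push Not at hcon
  obtain ⟨hr0, hr1, hrs⟩ := hr
  have hk0 : (0 : ℝ) < k := by exact_mod_cast hk1
  have hrk := (hr0 k hk1).1
  -- small sets far from any point
  have H : ∀ x : X, ∃ S : Finset X, S ⊆ P ∧ ((P \ S).card : ℝ) < n / k ∧
      ∀ q ∈ convexHull ℝ (S : Set X), r k < ‖q - x‖ := by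
    intro x
    obtain ⟨f, -, c, hsub, hcard⟩ := hcon x
    refine ⟨P.filter (fun p => f p < c), Finset.filter_subset _ _, ?_, ?_⟩
    · have : P \ P.filter (fun p => f p < c) = P.filter (fun p => c ≤ f p) := by
        ext p; simp only [Finset.mem_sdiff, Finset.mem_filter, not_and, not_lt]; tauto
      rw [this]; exact hcard
    · intro q hq
      have hlt : q ∈ {y : X | f y < c} := by
        refine convexHull_min ?_ (convex_halfSpace_lt f.toLinearMap.isLinear c) hq
        intro p hp
        simp only [Finset.coe_filter, Set.mem_ofPred_eq] at hp
        exact hp.2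
      by_contra hle
      have : q ∈ Metric.closedBall x (r k) := by
        rw [Metric.mem_closedBall, dist_eq_norm]; linarith
      have h2 := hsub this
      simp only [Set.mem_ofPred_eq] at h2 hlt
      linarith
  have main : ∀ j : ℕ, 1 ≤ j → j ≤ k → ∃ (T : Finset X) (C : Set X), T ⊆ P ∧
      (T : Set X) ⊆ C ∧ IsCompact C ∧ Convex ℝ C ∧ ((P \ T).card : ℝ) < j * (n / k) ∧
      ∀ q ∈ C, r k / r j < ‖q‖ := by
    intro j hj
    induction j, hj using Nat.le_induction with
    | base =>
      intro _
      obtain ⟨S, hS, hc, hq⟩ := H 0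
      refine ⟨S, convexHull ℝ (S : Set X), hS, subset_convexHull _ _,
        (S.finite_toSet.isCompact_convexHull ℝ), convex_convexHull _ _, by simpa using hc, ?_⟩
      intro q hqq
      simpa [hr1] using hq q hqq
    | succ j hj ih =>
      intro hjk
      obtain ⟨T, C, hT, hTC, hCc, hCv, hcard, hCq⟩ := ih (by omega)
      have hjk' : (j : ℝ) * (n / k) ≤ n := by
        have : (j : ℝ) ≤ k := by exact_mod_cast (by omega : j ≤ k)
        rw [← mul_div_assoc, div_le_iff₀ hk0, mul_comm]
        exact mul_le_mul_of_nonneg_left this (Nat.cast_nonneg n)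
      have hTne : T.Nonempty := by
        by_contra hne
        rw [Finset.not_nonempty_iff_eq_empty] at hne
        rw [hne, Finset.sdiff_empty, hPcard] at hcard
        linarith
      obtain ⟨q, hqC, hqmin⟩ := hCc.exists_isMinOn (Set.Nonempty.mono hTC (Finset.coe_nonempty.2 hTne)) continuous_norm.continuousOn
      have hmin : ∀ p ∈ C, ‖q‖ ≤ ‖p‖ := fun p hp => hqmin hp
      obtain ⟨S, hS, hSc, hSq⟩ := H q
      have hrj := (hr0 j hj).1
      have hrj1 := (hr0 (j + 1) (by omega)).1
      have hq := hCq q hqC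
      have hq0 : 0 < ‖q‖ := lt_trans (by positivity) hq
      refine ⟨T ∩ S, C ∩ convexHull ℝ (S : Set X), Finset.inter_subset_left.trans hT, ?_,
        hCc.inter (S.finite_toSet.isCompact_convexHull ℝ), hCv.inter (convex_convexHull _ _), ?_, ?_⟩
      · rw [Finset.coe_inter]
        exact Set.inter_subset_inter hTC (subset_convexHull _ _)
      · have : (P \ (T ∩ S)).card ≤ (P \ T).card + (P \ S).card := by
          rw [show P \ (T ∩ S) = (P \ T) ∪ (P \ S) from sdiff_inf]
          exact Finset.card_union_le _ _
        have h2 : ((P \ (T ∩ S)).card : ℝ) ≤ (P \ T).card + (P \ S).card := by exact_mod_cast this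
        push_cast
        linarith
      · rintro p ⟨hpC, hpS⟩
        have hd := hSq p hpS
        have hz := hrs j hj
        rw [div_lt_iff₀ hrj] at hq
        rw [div_lt_iff₀ hrj1]
        rcases lt_or_ge (r k) (‖q‖ * r (j + 1)) with h | h
        · exact h.trans_le (mul_le_mul_of_nonneg_right (hmin p hpC) hrj1.le)
        · have := ndc_key2 hCv hqC hq0 hmin hpC hrj1.le (by linarith)
          calc r k < ‖q‖ * r j := hq
            _ = ‖q‖ * zetaConv X (r (j + 1)) * r (j + 1) := by rw [← hz]; ring
            _ ≤ _ := mul_le_mul_of_nonneg_right this hrj1.le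
  obtain ⟨T, C, hT, hTC, -, -, hcard, hCq⟩ := main k hk1 le_rfl
  have hTne : T.Nonempty := by
    by_contra hne
    rw [Finset.not_nonempty_iff_eq_empty] at hne
    rw [hne, Finset.sdiff_empty, hPcard, mul_div_cancel₀ _ hk0.ne'] at hcard
    linarith
  obtain ⟨p, hp⟩ := hTne
  have h1 := hCq p (hTC hp)
  have h2 := hP p (hT hp)
  rw [div_self hrk.ne'] at h1
  rw [mem_closedBall_zero_iff] at h2
  linarith
end

section
/- Let K and L be convex subsets of the Euclidean space ℝ^d, let ρ_1, ρ_2 > 0, and let p be a point of K that is a nearest point of K to the origin, i.e., p ∈ K and ‖p‖ = dist(0, K). Assume ‖p‖ > ρ_1 and dist(p, L) > ρ_2. Then either K ∩ L is empty or dist(0, K ∩ L) > √(ρ_1² + ρ_2²). -/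
open scoped Classical

/-- **Euclidean minimal deviation (law-of-cosines corollary).** -/
theorem euclidean_min_deviation
    {d : ℕ} (K L : Set (EuclideanSpace ℝ (Fin d)))
    (hK : Convex ℝ K) (hL : Convex ℝ L)
    {ρ₁ ρ₂ : ℝ} (hρ₁ : 0 < ρ₁) (hρ₂ : 0 < ρ₂)
    (p : EuclideanSpace ℝ (Fin d)) (hpK : p ∈ K)
    (hnear : ‖p‖ = Metric.infDist (0 : EuclideanSpace ℝ (Fin d)) K)
    (hp : ρ₁ < ‖p‖) (hpL : ρ₂ < Metric.infDist p L) :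
    K ∩ L = ∅ ∨
      Real.sqrt (ρ₁ ^ 2 + ρ₂ ^ 2) <
        Metric.infDist (0 : EuclideanSpace ℝ (Fin d)) (K ∩ L) := by
  rcases Set.eq_empty_or_nonempty (K ∩ L) with h | hne
  · exact Or.inl h
  right
  have hmin : ∀ x ∈ K, ‖p‖ ≤ ‖x‖ := by
    intro x hx
    have := Metric.infDist_le_dist_of_mem (x := (0 : EuclideanSpace ℝ (Fin d))) hx
    rw [dist_zero_left] at this
    linarith
  have hin : ∀ x ∈ K, 0 ≤ inner ℝ p (x - p) := by
    intro x hx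
    by_contra hneg
    push Not at hneg
    have key : ∀ t : ℝ, 0 ≤ t → t ≤ 1 →
        0 ≤ 2 * t * inner ℝ p (x - p) + t ^ 2 * ‖x - p‖ ^ 2 := by
      intro t h0 h1
      have hm := hmin _ (hK.add_smul_sub_mem hpK hx ⟨h0, h1⟩)
      have h2 := norm_add_sq_real p (t • (x - p))
      rw [inner_smul_right, norm_smul, mul_pow, Real.norm_eq_abs, sq_abs] at h2
      have h3 : ‖p‖ ^ 2 ≤ ‖p + t • (x - p)‖ ^ 2 := by gcongr
      linarith
    generalize inner ℝ p (x - p) = a at *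
    generalize ‖x - p‖ ^ 2 = b at *
    have hb : 0 < b := by
      have := key 1 (by norm_num) le_rfl
      linarith
    have hb2 : 0 < b - a := by linarith
    have := key (-a / (b - a)) (by apply div_nonneg <;> linarith)
      (by rw [div_le_one hb2]; linarith)
    have e : 2 * (-a / (b - a)) * a + (-a / (b - a)) ^ 2 * b
        = -(a ^ 2 * (b - 2 * a)) / (b - a) ^ 2 := by
      field_simp
      ring
    rw [e] at this
    have h4 : 0 < a ^ 2 * (b - 2 * a) / (b - a) ^ 2 := by
      apply div_pos (mul_pos (by nlinarith) (by linarith)) (by positivity)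
    rw [neg_div] at this
    linarith
  have hlow : Real.sqrt (‖p‖ ^ 2 + Metric.infDist p L ^ 2) ≤
      Metric.infDist (0 : EuclideanSpace ℝ (Fin d)) (K ∩ L) := by
    rw [Metric.le_infDist hne]
    rintro x ⟨hxK, hxL⟩
    rw [dist_zero_left]
    apply Real.sqrt_le_iff.2 ⟨norm_nonneg _, ?_⟩
    have h1 := Metric.infDist_le_dist_of_mem (x := p) hxL
    rw [dist_comm, dist_eq_norm] at h1
    have h2 := norm_add_sq_real p (x - p)
    rw [add_sub_cancel] at h2
    have h3 : Metric.infDist p L ^ 2 ≤ ‖x - p‖ ^ 2 := by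
      have := hρ₂.trans hpL
      gcongr
    have := hin x hxK
    linarith
  refine lt_of_lt_of_le (Real.sqrt_lt_sqrt (by positivity) ?_) hlow
  gcongr
end

section
/- Let X be a real normed space (of dimension at least 2, so that quasi-orthogonal unit vectors exist). For every r ∈ (0,1] there exists a unique t ∈ (0,1] such that t·ζ_X(t) = r. Consequently, the recursively defined sequence r_1 = 1, r_{j+1} = the unique solution in (0,1] of t·ζ_X(t) = r_j, is well-defined. -/
open scoped Classical

namespace HellyAux

lemma exists_pair {X : Type*} [NormedAddCommGroup X] [NormedSpace ℝ X]
    (hdim : 2 ≤ Module.rank ℝ X) :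
    ∃ x y : X, ‖x‖ = 1 ∧ ‖y‖ = 1 ∧ QuasiOrth y x := by
  have h1 : 1 < Module.rank ℝ X := lt_of_lt_of_le (by norm_num) hdim
  have : Nontrivial X := rank_pos_iff_nontrivial.mp (lt_trans (by norm_num) h1)
  obtain ⟨x, hx⟩ := exists_norm_eq X (zero_le_one (α := ℝ))
  obtain ⟨f, hf, hfx⟩ := exists_dual_vector ℝ x (by intro h; simp [h] at hx)
  have hfx1 : f x = 1 := by simpa [hx] using hfx
  obtain ⟨z, hz⟩ : ∃ z : X, ∀ c : ℝ, c • x ≠ z := by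
    by_contra! h
    have := rank_le_one_iff.mpr ⟨x, h⟩
    exact absurd this (not_le.mpr h1)
  have hw : z - f z • x ≠ 0 := fun h => hz (f z) (sub_eq_zero.mp h).symm
  have hn : ‖z - f z • x‖ ≠ 0 := norm_ne_zero_iff.mpr hw
  refine ⟨x, ‖z - f z • x‖⁻¹ • (z - f z • x), hx, ?_, f, ?_, ?_, ?_⟩
  · rw [norm_smul, norm_inv, norm_norm, inv_mul_cancel₀ hn]
  · rintro rfl; simp at hfx1
  · rw [hf, hx, hfx1]; norm_num
  · simp [hfx1]

lemma one_le {X : Type*} [NormedAddCommGroup X] [NormedSpace ℝ X] {x y : X}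
    (hx : ‖x‖ = 1) (h : QuasiOrth y x) (t : ℝ) : 1 ≤ ‖x + t • y‖ := by
  obtain ⟨f, hf, hfx, hfy⟩ := h
  have hp : 0 < ‖f‖ := norm_pos_iff.mpr hf
  have h1 : f (x + t • y) = ‖f‖ := by simp [hfx, hfy, hx]
  have h2 := f.le_opNorm (x + t • y)
  rw [h1, norm_norm] at h2
  nlinarith

lemma mono_pt {X : Type*} [NormedAddCommGroup X] [NormedSpace ℝ X] {x y : X}
    (hx : ‖x‖ = 1) (h : QuasiOrth y x) {s t : ℝ} (hs : 0 ≤ s) (hst : s ≤ t) (ht : 0 < t) :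
    ‖x + s • y‖ ≤ ‖x + t • y‖ := by
  have h1 := one_le hx h t
  have e : x + s • y = (1 - s / t) • x + (s / t) • (x + t • y) := by
    rw [smul_add, smul_smul, div_mul_cancel₀ _ ht.ne', sub_smul, one_smul]; abel
  have a : 0 ≤ s / t := div_nonneg hs ht.le
  have b : s / t ≤ 1 := (div_le_one ht).mpr hst
  rw [e]
  refine (norm_add_le _ _).trans ?_
  rw [norm_smul, norm_smul, Real.norm_of_nonneg a, Real.norm_of_nonneg (sub_nonneg.mpr b), hx]
  nlinarith

lemma bdd (X : Type*) [NormedAddCommGroup X] [NormedSpace ℝ X] (t : ℝ) :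
    BddBelow {u : ℝ | ∃ x y : X, ‖x‖ = 1 ∧ ‖y‖ = 1 ∧ QuasiOrth y x ∧ u = ‖x + t • y‖} := by
  refine ⟨0, ?_⟩
  rintro u ⟨x, y, -, -, -, rfl⟩
  exact norm_nonneg _

lemma zeta_le {X : Type*} [NormedAddCommGroup X] [NormedSpace ℝ X] {x y : X}
    (hx : ‖x‖ = 1) (hy : ‖y‖ = 1) (h : QuasiOrth y x) (t : ℝ) :
    zetaConv X t ≤ ‖x + t • y‖ := csInf_le (bdd X t) ⟨x, y, hx, hy, h, rfl⟩

lemma le_zeta {X : Type*} [NormedAddCommGroup X] [NormedSpace ℝ X]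
    (hdim : 2 ≤ Module.rank ℝ X) {c t : ℝ}
    (H : ∀ x y : X, ‖x‖ = 1 → ‖y‖ = 1 → QuasiOrth y x → c ≤ ‖x + t • y‖) :
    c ≤ zetaConv X t := by
  obtain ⟨x, y, hx, hy, h⟩ := exists_pair hdim
  refine le_csInf ⟨_, x, y, hx, hy, h, rfl⟩ ?_
  rintro u ⟨x, y, hx, hy, h, rfl⟩
  exact H x y hx hy h

lemma key {X : Type*} [NormedAddCommGroup X] [NormedSpace ℝ X]
    (hdim : 2 ≤ Module.rank ℝ X) (r : ℝ) (hr : r ∈ Set.Ioc (0 : ℝ) 1) :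
      ∃! t : ℝ, t ∈ Set.Ioc (0 : ℝ) 1 ∧ t * zetaConv X t = r := by
  have one : ∀ t, 1 ≤ zetaConv X t := fun t => le_zeta hdim fun x y hx _ h => one_le hx h t
  have mono : ∀ s t, 0 < s → s < t → s * zetaConv X s < t * zetaConv X t := by
    intro s t hs hst
    have : zetaConv X s ≤ zetaConv X t := le_zeta hdim fun x y hx hy h =>
      (zeta_le hx hy h s).trans (mono_pt hx h hs.le hst.le (hs.trans hst))
    nlinarith [one s]
  have cont : Continuous (zetaConv X) := by
    refine (LipschitzWith.of_le_add fun s t => ?_).continuous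
    rw [← sub_le_iff_le_add]
    refine le_zeta hdim fun x y hx hy h => ?_
    rw [sub_le_iff_le_add]
    refine (zeta_le hx hy h s).trans ?_
    have e : x + s • y = (x + t • y) + (s - t) • y := by rw [sub_smul]; abel
    rw [e]
    refine (norm_add_le _ _).trans ?_
    rw [norm_smul, hy, mul_one, Real.dist_eq, Real.norm_eq_abs]
  have hc : ContinuousOn (fun t => t * zetaConv X t) (Set.Icc 0 1) :=
    (continuous_id.mul cont).continuousOn
  obtain ⟨t, ht, hte⟩ := intermediate_value_Icc zero_le_one hc
    (show r ∈ Set.Icc _ _ from ⟨by simpa using hr.1.le, by simpa using hr.2.trans (one 1)⟩)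
  have hte : t * zetaConv X t = r := hte
  have ht0 : 0 < t := lt_of_le_of_ne ht.1 (by rintro rfl; have := hr.1; simp at hte; linarith)
  refine ⟨t, ⟨⟨ht0, ht.2⟩, hte⟩, ?_⟩
  rintro s ⟨hs, hse⟩
  rcases lt_trichotomy s t with h | h | h
  · have := mono s t hs.1 h; linarith
  · exact h
  · have := mono t s ht0 h; linarith

end HellyAux

/-- **Well-definedness of the Helly sequence.** In a normed space of dimension at
least two, for every `r ∈ (0,1]` the equation `t · ζ_X(t) = r` has a unique solution
`t ∈ (0,1]`; consequently the recursively defined sequence `r₁ = 1`,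
`r_{j+1} ζ_X(r_{j+1}) = r_j` is well-defined. -/
theorem helly_sequence_well_defined
    {X : Type*} [NormedAddCommGroup X] [NormedSpace ℝ X]
    (hdim : 2 ≤ Module.rank ℝ X) :
    (∀ r ∈ Set.Ioc (0 : ℝ) 1,
      ∃! t : ℝ, t ∈ Set.Ioc (0 : ℝ) 1 ∧ t * zetaConv X t = r) ∧
    ∃ rs : ℕ → ℝ, rs 1 = 1 ∧ ∀ j : ℕ, 1 ≤ j →
      rs (j + 1) ∈ Set.Ioc (0 : ℝ) 1 ∧
      rs (j + 1) * zetaConv X (rs (j + 1)) = rs j := by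
  refine ⟨HellyAux.key hdim, ?_⟩
  choose! g hg using fun r hr => (HellyAux.key hdim r hr).exists
  have hm : ∀ n : ℕ, g^[n] 1 ∈ Set.Ioc (0 : ℝ) 1 := by
    intro n
    induction n with
    | zero => simp
    | succ n ih => rw [Function.iterate_succ_apply']; exact (hg _ ih).1
  refine ⟨fun n => g^[n - 1] 1, by simp, ?_⟩
  intro j hj
  obtain ⟨k, rfl⟩ := Nat.exists_eq_add_of_le' hj
  simp only [Nat.add_sub_cancel, Function.iterate_succ_apply']
  exact hg _ (hm k)
end

section
/- Let X be a uniformly convex real Banach space and let r be a Helly sequence for X. Then the sequence (r_k) is strictly monotonically decreasing and converges to 0. -/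
open scoped Classical

theorem zeta_elem_aux {X : Type*} [NormedAddCommGroup X] [NormedSpace ℝ X]
    {c ε : ℝ} (hc : 0 < c) (hcε : c ≤ ε) (hε : ε ≤ 1) (hd : 0 < modConv X (c / 2))
    {x y : X} (hx : ‖x‖ = 1) (hy : ‖y‖ = 1) (hq : QuasiOrth y x) :
    1 + modConv X (c / 2) ≤ ‖x + ε • y‖ := by
  obtain ⟨f, hf0, hfx, hfy⟩ := hq
  have hf : 0 < ‖f‖ := norm_pos_iff.mpr hf0
  have ht1 : 1 ≤ ‖x + ε • y‖ := by
    have h1 := (le_abs_self _).trans (f.le_opNorm (x + ε • y))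
    simp only [map_add, map_smul, hfx, hfy, hx, smul_zero, add_zero, mul_one] at h1
    by_contra! h
    nlinarith
  have ht2 : ‖x + ε • y‖ ≤ 2 := by
    refine (norm_add_le _ _).trans ?_
    rw [norm_smul, hx, hy, Real.norm_eq_abs, abs_of_pos (by linarith)]
    linarith
  have hs : 2 ≤ ‖x + (x + ε • y)‖ := by
    have h1 := (le_abs_self _).trans (f.le_opNorm (x + (x + ε • y)))
    simp only [map_add, map_smul, hfx, hfy, hx, smul_zero, add_zero, mul_one] at h1
    by_contra! h
    nlinarith
  set t := ‖x + ε • y‖ with ht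
  have htp : 0 < t := by linarith
  have hti : ‖t⁻¹‖ = t⁻¹ := by rw [Real.norm_eq_abs, abs_of_pos (inv_pos.mpr htp)]
  have key : modConv X (c / 2) ≤ 1 - ‖t⁻¹ • x + t⁻¹ • (x + ε • y)‖ / 2 := by
    apply csInf_le
    · refine ⟨0, ?_⟩
      rintro _ ⟨a, b, ha, hb, -, rfl⟩
      have := norm_add_le a b
      linarith
    · refine ⟨_, _, ?_, ?_, ?_, rfl⟩
      · rw [norm_smul, hti, hx, mul_one]
        exact inv_le_one_of_one_le₀ ht1
      · rw [norm_smul, hti, ← ht, inv_mul_cancel₀ htp.ne']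
      · rw [← smul_sub, norm_smul, hti, sub_add_cancel_left, norm_neg, norm_smul, hy, mul_one,
          Real.norm_eq_abs, abs_of_pos (by linarith), inv_mul_eq_div, div_le_div_iff₀ two_pos htp]
        nlinarith
  rw [← smul_add, norm_smul, hti] at key
  have h2 : t⁻¹ * 2 ≤ t⁻¹ * ‖x + (x + ε • y)‖ :=
    mul_le_mul_of_nonneg_left hs (inv_pos.mpr htp).le
  have h3 : modConv X (c / 2) ≤ 1 - t⁻¹ := by linarith
  have h4 := mul_le_mul_of_nonneg_right h3 htp.le
  rw [sub_mul, inv_mul_cancel₀ htp.ne'] at h4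
  nlinarith

theorem helly_step_aux {X : Type*} [NormedAddCommGroup X] [NormedSpace ℝ X]
    (hX : UnifConvex X) {r : ℕ → ℝ} (hr : IsHellySeq X r) {c : ℝ} (hc : 0 < c) (hc1 : c ≤ 1)
    {j : ℕ} (hj : 1 ≤ j) (hcj : c ≤ r (j + 1)) :
    r (j + 1) * (1 + modConv X (c / 2)) ≤ r j := by
  obtain ⟨h1, -, h3⟩ := hr
  have hz := h3 j hj
  have hp := h1 (j + 1) (by omega)
  have hjp := (h1 j hj).1
  rw [← hz]
  refine mul_le_mul_of_nonneg_left ?_ hp.1.le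
  refine le_csInf ?_ ?_
  · rw [Set.nonempty_iff_ne_empty]
    intro he
    rw [zetaConv, he, Real.sInf_empty, mul_zero] at hz
    linarith
  · rintro _ ⟨x, y, hx, hy, hq, rfl⟩
    exact zeta_elem_aux hc hcj hp.2 (hX _ ⟨by linarith, by linarith⟩) hx hy hq

/-- **The Helly sequence of a uniformly convex Banach space is strictly decreasing
and tends to zero.** -/
theorem helly_sequence_strictAnti_tendsto_zero
    {X : Type*} [NormedAddCommGroup X] [NormedSpace ℝ X] [CompleteSpace X]
    (hX : UnifConvex X) {r : ℕ → ℝ} (hr : IsHellySeq X r) :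
    (∀ j : ℕ, 1 ≤ j → r (j + 1) < r j) ∧
      Filter.Tendsto r Filter.atTop (nhds 0) := by
  have hlt : ∀ j : ℕ, 1 ≤ j → r (j + 1) < r j := by
    intro j hj
    have hp := hr.1 (j + 1) (by omega)
    have h := helly_step_aux hX hr hp.1 hp.2 hj le_rfl
    have hd := hX (r (j + 1) / 2) ⟨by linarith [hp.1], by linarith [hp.2]⟩
    nlinarith [hp.1]
  refine ⟨hlt, ?_⟩
  have hanti : Antitone (fun n => r (n + 1)) :=
    antitone_nat_of_succ_le fun n => (hlt (n + 1) (by omega)).le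
  have hbdd : BddBelow (Set.range fun n => r (n + 1)) :=
    ⟨0, by rintro _ ⟨n, rfl⟩; exact (hr.1 (n + 1) (by omega)).1.le⟩
  have hlim := tendsto_atTop_ciInf hanti hbdd
  have hle : ∀ n, (⨅ n, r (n + 1)) ≤ r (n + 1) := fun n => ciInf_le hbdd n
  have hL0 : 0 ≤ ⨅ n, r (n + 1) := le_ciInf fun n => (hr.1 (n + 1) (by omega)).1.le
  generalize (⨅ n, r (n + 1)) = L at hlim hle hL0
  rcases hL0.eq_or_lt with h | h
  · subst h
    exact (Filter.tendsto_add_atTop_iff_nat 1).mp hlim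
  · exfalso
    have hL1 : L ≤ 1 := (hle 0).trans (hr.1 1 le_rfl).2
    have hd := hX (L / 2) ⟨by linarith, by linarith⟩
    have hlim2 := ((Filter.tendsto_add_atTop_iff_nat 1).mpr hlim).mul_const (1 + modConv X (L / 2))
    have := le_of_tendsto_of_tendsto' hlim2 hlim fun n =>
      helly_step_aux hX hr h hL1 (by omega) (hle (n + 1))
    nlinarith
end

section
/- Let X be a real normed space whose modulus of convexity is of power type q, i.e., there exist constants C_X > 0 and q ≥ 2 such that δ_X(ε) ≥ C_X·ε^q for all ε ∈ [0,1]. Let r be a Helly sequence for X and set C̃ = max{1, 2·(2/(q·C_X))^{1/q}}. Then r_k ≤ C̃·k^{−1/q} for every k ≥ 1. -/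
open scoped Classical

lemma modConv_le_aux {X : Type*} [NormedAddCommGroup X] [NormedSpace ℝ X] {ε : ℝ} {x y : X}
    (hx : ‖x‖ ≤ 1) (hy : ‖y‖ ≤ 1) (h : ε ≤ ‖x - y‖) : modConv X ε ≤ 1 - ‖x + y‖ / 2 := by
  unfold modConv
  apply csInf_le
  · refine ⟨0, ?_⟩
    rintro t ⟨a, b, ha, hb, -, rfl⟩
    have := norm_add_le a b
    linarith
  · exact ⟨x, y, hx, hy, h, rfl⟩

lemma elem_aux {X : Type*} [NormedAddCommGroup X] [NormedSpace ℝ X]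
    {C q : ℝ} (hq : 2 ≤ q)
    (hpow : ∀ ε ∈ Set.Icc (0 : ℝ) 1, C * ε ^ q ≤ modConv X ε) {ε : ℝ} (h0 : 0 < ε) (h1 : ε ≤ 1)
    {x y : X} (hx : ‖x‖ = 1) (hy : ‖y‖ = 1) (hxy : QuasiOrth y x) :
    1 ≤ ‖x + ε • y‖ ∧ C * ε ^ q ≤ ‖x + ε • y‖ ^ q - ‖x + ε • y‖ ^ (q - 1) := by
  obtain ⟨f, hf, hfx, hfy⟩ := hxy
  have hf' : 0 < ‖f‖ := norm_pos_iff.mpr hf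
  have key : ∀ z : X, ∀ c : ℝ, f z = c * ‖f‖ → c ≤ ‖z‖ := by
    intro z c hz
    have := (le_abs_self _).trans (f.le_opNorm z)
    rw [hz, mul_comm] at this
    exact le_of_mul_le_mul_left this hf'
  have ht : 1 ≤ ‖x + ε • y‖ := key _ _ (by simp [hfx, hfy, hx])
  refine ⟨ht, ?_⟩
  have h2 : 2 ≤ ‖x + (x + ε • y)‖ := key _ _ (by simp [hfx, hfy, hx]; ring)
  set z := x + ε • y with hz
  set t := ‖z‖ with htt
  have tpos : 0 < t := by linarith
  have hd := modConv_le_aux (X := X) (ε := ε / t) (x := t⁻¹ • x) (y := t⁻¹ • z)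
    (by rw [norm_smul, hx, Real.norm_of_nonneg (by positivity)]; simpa using inv_le_one_of_one_le₀ ht)
    (by rw [norm_smul, Real.norm_of_nonneg (by positivity), ← htt]; field_simp; rfl)
    (by
      rw [← smul_sub, norm_smul, Real.norm_of_nonneg (by positivity), hz, sub_add_cancel_left,
        norm_neg, norm_smul, hy, Real.norm_of_nonneg h0.le]
      apply le_of_eq; field_simp)
  rw [← smul_add, norm_smul, Real.norm_of_nonneg (by positivity)] at hd
  have hp := hpow (ε / t) ⟨by positivity, by rw [div_le_one tpos]; linarith⟩
  have h3 : t⁻¹ * 2 ≤ t⁻¹ * ‖x + z‖ := by gcongr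
  have h4 : C * (ε / t) ^ q ≤ 1 - t⁻¹ := by linarith
  rw [Real.div_rpow h0.le tpos.le] at h4
  have hP : 0 < t ^ q := by positivity
  rw [Real.rpow_sub_one tpos.ne']
  calc C * ε ^ q = (C * (ε ^ q / t ^ q)) * t ^ q := by field_simp
    _ ≤ (1 - t⁻¹) * t ^ q := by gcongr
    _ = _ := by field_simp

lemma zeta_aux {X : Type*} [NormedAddCommGroup X] [NormedSpace ℝ X]
    {C q : ℝ} (hq : 2 ≤ q)
    (hpow : ∀ ε ∈ Set.Icc (0 : ℝ) 1, C * ε ^ q ≤ modConv X ε) {ε : ℝ} (h0 : 0 < ε) (h1 : ε ≤ 1)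
    (hz : zetaConv X ε ≠ 0) :
    1 ≤ zetaConv X ε ∧ C * ε ^ q ≤ zetaConv X ε ^ q - zetaConv X ε ^ (q - 1) := by
  have hcl : IsClosed {t : ℝ | 1 ≤ t ∧ C * ε ^ q ≤ t ^ q - t ^ (q - 1)} := by
    apply IsClosed.inter
    · exact isClosed_Ici
    · exact isClosed_le continuous_const
        ((Real.continuous_rpow_const (by linarith)).sub (Real.continuous_rpow_const (by linarith)))
  have hsub : {t : ℝ | ∃ x y : X, ‖x‖ = 1 ∧ ‖y‖ = 1 ∧ QuasiOrth y x ∧ t = ‖x + ε • y‖} ⊆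
      {t : ℝ | 1 ≤ t ∧ C * ε ^ q ≤ t ^ q - t ^ (q - 1)} := by
    rintro t ⟨x, y, hx, hy, hxy, rfl⟩
    exact elem_aux hq hpow h0 h1 hx hy hxy
  have hne : {t : ℝ | ∃ x y : X, ‖x‖ = 1 ∧ ‖y‖ = 1 ∧ QuasiOrth y x ∧ t = ‖x + ε • y‖}.Nonempty := by
    by_contra h
    rw [Set.not_nonempty_iff_eq_empty] at h
    apply hz
    unfold zetaConv
    rw [h, Real.sInf_empty]
  exact closure_minimal hsub hcl (csInf_mem_closure hne ⟨1, fun t ht => (hsub ht).1⟩)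

lemma C_aux {X : Type*} [NormedAddCommGroup X] [NormedSpace ℝ X]
    {C q : ℝ} (hC : 0 < C)
    (hpow : ∀ ε ∈ Set.Icc (0 : ℝ) 1, C * ε ^ q ≤ modConv X ε) : C ≤ 1 := by
  have h := hpow 1 (by simp)
  rw [Real.one_rpow, mul_one] at h
  have hne : {t : ℝ | ∃ x y : X, ‖x‖ ≤ 1 ∧ ‖y‖ ≤ 1 ∧ 1 ≤ ‖x - y‖ ∧ t = 1 - ‖x + y‖ / 2}.Nonempty := by
    by_contra h'
    rw [Set.not_nonempty_iff_eq_empty] at h'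
    unfold modConv at h
    rw [h', Real.sInf_empty] at h
    linarith
  obtain ⟨t, x, y, hx, hy, hxy, -⟩ := hne
  have := modConv_le_aux hx hy hxy
  have := norm_nonneg (x + y)
  linarith

lemma incr_aux {C q e t : ℝ} (hC : 0 < C) (hC1 : C ≤ 1) (hq : 2 ≤ q) (h0 : 0 < e) (h1 : e ≤ 1)
    (ht : 1 ≤ t) (h : C * e ^ q ≤ t ^ q - t ^ (q - 1)) :
    ((e * t) ^ q)⁻¹ + q * C / (2 * 2 ^ q) ≤ (e ^ q)⁻¹ := by
  have tpos : 0 < t := by linarith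
  rw [Real.rpow_sub_one tpos.ne'] at h
  rw [Real.mul_rpow h0.le tpos.le]
  have hP1 : 1 ≤ t ^ q := Real.one_le_rpow ht (by linarith)
  have hE0 : 0 < e ^ q := by positivity
  have hE1 : e ^ q ≤ 1 := Real.rpow_le_one h0.le h1 (by linarith)
  have hb : 1 + q * (t - 1) ≤ t ^ q := by
    have := one_add_mul_self_le_rpow_one_add (s := t - 1) (by linarith) (p := q) (by linarith)
    simpa using this
  have h2 : 1 + q ≤ (2:ℝ) ^ q := by
    have := one_add_mul_self_le_rpow_one_add (s := (1:ℝ)) (by linarith) (p := q) (by linarith)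
    norm_num at this
    exact this
  have hd2 : q * C / (2 * 2 ^ q) ≤ 1 / 2 := by
    rw [div_le_div_iff₀ (by positivity) (by norm_num)]
    nlinarith
  have hd4 : q * C / (2 * 2 ^ q) ≤ q * C / 4 := by
    apply div_le_div_of_nonneg_left <;> first | positivity | linarith
  have hd0 : 0 ≤ q * C / (2 * 2 ^ q) := by positivity
  set d := q * C / (2 * 2 ^ q)
  set P := t ^ q
  set E := e ^ q
  have hPp : 0 < P := by linarith
  suffices hs : d * E ≤ 1 - P⁻¹ by
    have e1 : (E * P)⁻¹ + d = (P⁻¹ + d * E) * E⁻¹ := by field_simp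
    rw [e1]
    have : (P⁻¹ + d * E) * E⁻¹ ≤ 1 * E⁻¹ := by
      gcongr
      linarith
    linarith
  rcases le_total 2 P with hP | hP
  · have : P⁻¹ ≤ 2⁻¹ := by gcongr
    nlinarith
  · have e2 : C * E ≤ 2 * (t - 1) := by
      have : P - P / t = P * ((t - 1) / t) := by field_simp
      have h5 : (t - 1) / t ≤ t - 1 := div_le_self (by linarith) ht
      have h6 : 0 ≤ (t - 1) / t := div_nonneg (by linarith) tpos.le
      nlinarith
    have e3 : 1 - P⁻¹ = (P - 1) / P := by field_simp
    have e4 : (P - 1) / 2 ≤ (P - 1) / P := by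
      apply div_le_div_of_nonneg_left <;> linarith
    have e5 : q * (C * E) ≤ q * (2 * (t - 1)) := by gcongr
    have e6 : d * E ≤ q * C / 4 * E := by gcongr
    rw [e3]
    linarith

/-- **Power-type bound on the Helly sequence.** If the modulus of convexity of `X` is
of power type `q`, then `r_k ≤ C̃ k^{-1/q}` with
`C̃ = max {1, 2 (2/(q C_X))^{1/q}}`. -/
theorem helly_sequence_power_type_bound
    {X : Type*} [NormedAddCommGroup X] [NormedSpace ℝ X]
    {C_X q : ℝ} (hC : 0 < C_X) (hq : 2 ≤ q)
    (hpow : ∀ ε ∈ Set.Icc (0 : ℝ) 1, C_X * ε ^ q ≤ modConv X ε)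
    {r : ℕ → ℝ} (hr : IsHellySeq X r) :
    ∀ k : ℕ, 1 ≤ k →
      r k ≤ max 1 (2 * (2 / (q * C_X)) ^ (1 / q)) * (k : ℝ) ^ (-(1 / q)) := by
  intro k hk
  obtain ⟨hr0, hr1, hrec⟩ := hr
  have hC1 := C_aux hC hpow
  have qpos : 0 < q := by linarith
  set K := max 1 (2 * (2 / (q * C_X)) ^ (1 / q)) with hK
  have hK1 : 1 ≤ K := le_max_left _ _
  have hKp : 0 < K := by linarith
  have hM1 : 1 ≤ K ^ q := Real.one_le_rpow hK1 qpos.le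
  have hMd : (K ^ q)⁻¹ ≤ q * C_X / (2 * 2 ^ q) := by
    have h : (2 * (2 / (q * C_X)) ^ (1 / q)) ^ q ≤ K ^ q :=
      Real.rpow_le_rpow (by positivity) (le_max_right _ _) qpos.le
    rw [Real.mul_rpow (by norm_num) (by positivity), ← Real.rpow_mul (by positivity),
      one_div_mul_cancel qpos.ne', Real.rpow_one] at h
    have h' := inv_anti₀ (by positivity) h
    refine h'.trans (le_of_eq ?_)
    field_simp
  have main : (k : ℝ) * (K ^ q)⁻¹ ≤ (r k ^ q)⁻¹ := by
    induction k, hk using Nat.le_induction with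
    | base => simpa [hr1] using inv_le_one_of_one_le₀ hM1
    | succ j hj ih =>
      have hm := hr0 (j + 1) (by omega)
      have hj0 := (hr0 j hj).1
      have hre := hrec j hj
      have hz := zeta_aux hq hpow hm.1 hm.2 (by
        intro h0
        rw [h0, mul_zero] at hre
        linarith)
      have hi := incr_aux hC hC1 hq hm.1 hm.2 hz.1 hz.2
      rw [hre] at hi
      push_cast
      linarith
  have hkp : (0 : ℝ) < k := by exact_mod_cast hk
  have hrk := (hr0 k hk).1
  rw [← Real.rpow_le_rpow_iff hrk.le (by positivity) qpos, Real.mul_rpow hKp.le (by positivity),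
    ← Real.rpow_mul hkp.le, neg_mul, one_div_mul_cancel qpos.ne', Real.rpow_neg_one]
  have h := inv_anti₀ (by positivity) main
  rw [inv_inv, mul_inv, inv_inv] at h
  linarith
end

section
/- Let X be a real normed space, let ρ, ρ_L > 0, let K and L be convex subsets of X, and let x, y ∈ X satisfy: (1) y ∈ K and ‖x − y‖ = dist(x, K) = ρ (y is a nearest point of K to x); (2) dist(y, K ∩ L) > ρ_L. If K ∩ L is nonempty, then dist(x, K ∩ L) ≥ ρ·ζ_X(ρ_L/ρ). Moreover, if X is uniformly convex, then the inequality is strict: dist(x, K ∩ L) > ρ·ζ_X(ρ_L/ρ). -/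
open scoped Classical

def zSet (X : Type*) [NormedAddCommGroup X] [NormedSpace ℝ X] (ε : ℝ) : Set ℝ :=
  {t : ℝ | ∃ x y : X, ‖x‖ = 1 ∧ ‖y‖ = 1 ∧ QuasiOrth y x ∧ t = ‖x + ε • y‖}

lemma zetaConv_eq (X : Type*) [NormedAddCommGroup X] [NormedSpace ℝ X] (ε : ℝ) :
    zetaConv X ε = sInf (zSet X ε) := rfl

lemma zSet_bdd (X : Type*) [NormedAddCommGroup X] [NormedSpace ℝ X] (ε : ℝ) :
    BddBelow (zSet X ε) := by
  refine ⟨0, ?_⟩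
  rintro t ⟨x, y, -, -, -, rfl⟩
  positivity

lemma norm_ge_of_f {X : Type*} [NormedAddCommGroup X] [NormedSpace ℝ X] {f : X →L[ℝ] ℝ}
    (hf : f ≠ 0) {u w : X} (hu : ‖u‖ = 1) (hfu : f u = ‖f‖ * ‖u‖) (hw : 0 ≤ f w) :
    1 ≤ ‖u + w‖ := by
  have hp : 0 < ‖f‖ := norm_pos_iff.mpr hf
  have h1 : f (u + w) ≤ ‖f‖ * ‖u + w‖ := (le_abs_self _).trans (f.le_opNorm _)
  rw [map_add, hfu, hu] at h1
  nlinarith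

lemma core_mono {X : Type*} [NormedAddCommGroup X] [NormedSpace ℝ X] {p w h : X} {α β : ℝ}
    (hα : 0 ≤ α) (hβ : 0 ≤ β) (hh : h = α • w + β • p) (hn : ‖h‖ = ‖w‖)
    (hpw : ‖p‖ ≤ ‖p - w‖) : ‖p - h‖ ≤ ‖p - w‖ := by
  rcases le_or_gt 1 (α + β) with h1 | h1
  · have hs0 : 0 < α + β := by linarith
    set s : ℝ := (α + β)⁻¹ with hs
    have hsp : 0 < s := inv_pos.mpr hs0
    have hs1 : s ≤ 1 := inv_le_one_of_one_le₀ h1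
    have hsab : s * α + s * β = 1 := by rw [← mul_add]; exact inv_mul_cancel₀ hs0.ne'
    have e1 : w - s • h = (s * β) • (w - p) := by
      have : w = (s * α + s * β) • w := by rw [hsab, one_smul]
      rw [hh]; nth_rewrite 1 [this]; module
    have e2 : p - s • h = (s * α) • (p - w) := by
      have : p = (s * α + s * β) • p := by rw [hsab, one_smul]
      rw [hh]; nth_rewrite 1 [this]; module
    have e3 : s • h - h = (-(1 - s)) • h := by module
    have n1 : ‖w - s • h‖ = s * β * ‖p - w‖ := by
      rw [e1, norm_smul, norm_sub_rev, Real.norm_of_nonneg (by positivity)]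
    have n2 : ‖p - s • h‖ = s * α * ‖p - w‖ := by
      rw [e2, norm_smul, Real.norm_of_nonneg (by positivity)]
    have n3 : ‖s • h - h‖ = (1 - s) * ‖h‖ := by
      rw [e3, norm_smul, norm_neg, Real.norm_of_nonneg (by linarith)]
    have n4 : ‖s • h‖ = s * ‖h‖ := by
      rw [norm_smul, Real.norm_of_nonneg hsp.le]
    have t1 : ‖w‖ ≤ ‖w - s • h‖ + ‖s • h‖ := by
      simpa using norm_add_le (w - s • h) (s • h)
    have t2 : ‖p - h‖ ≤ ‖p - s • h‖ + ‖s • h - h‖ := by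
      simpa using norm_add_le (p - s • h) (s • h - h)
    have : s * α * ‖p - w‖ + s * β * ‖p - w‖ = ‖p - w‖ := by rw [← add_mul, hsab, one_mul]
    nlinarith
  · have e : p - h = α • (p - w) + (1 - α - β) • p := by rw [hh]; module
    have t : ‖p - h‖ ≤ α * ‖p - w‖ + (1 - α - β) * ‖p‖ := by
      rw [e]
      refine (norm_add_le _ _).trans ?_
      rw [norm_smul, norm_smul, Real.norm_of_nonneg hα, Real.norm_of_nonneg (by linarith)]
    have := norm_nonneg (p - w)
    nlinarith

lemma zeta_le_aux {X : Type*} [NormedAddCommGroup X] [NormedSpace ℝ X] {f : X →L[ℝ] ℝ}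
    (hf : f ≠ 0) {u w : X} {ε : ℝ} (hε : 0 < ε) (hu : ‖u‖ = 1) (hfu : f u = ‖f‖ * ‖u‖)
    (hw : 0 ≤ f w) (hwn : ‖w‖ = ε) (hne : (zSet X ε).Nonempty) :
    zetaConv X ε ≤ ‖u + w‖ := by
  have hp : 0 < ‖f‖ := norm_pos_iff.mpr hf
  rw [zetaConv_eq]
  have hfu' : f u = ‖f‖ := by rw [hfu, hu, mul_one]
  set c : ℝ := f w / ‖f‖ with hc
  have hc0 : 0 ≤ c := by positivity
  have hcf : c * ‖f‖ = f w := by rw [hc]; field_simp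
  by_cases hpar : w - c • u = 0
  · obtain ⟨t, ht⟩ := hne
    refine (csInf_le (zSet_bdd X ε) ht).trans ?_
    obtain ⟨a, b, ha, hb, -, rfl⟩ := ht
    have hwu : w = c • u := sub_eq_zero.mp hpar
    have hce : c = ε := by
      rw [← hwn, hwu, norm_smul, hu, mul_one, Real.norm_of_nonneg hc0]
    have : u + w = (1 + ε) • u := by rw [hwu, hce]; module
    rw [this, norm_smul, hu, Real.norm_of_nonneg (by linarith), mul_one]
    refine (norm_add_le _ _).trans ?_
    rw [norm_smul, ha, hb, Real.norm_of_nonneg hε.le, mul_one]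
  · have hq : 0 < ‖w - c • u‖ := norm_pos_iff.mpr hpar
    set k : X := (‖w - c • u‖)⁻¹ • (w - c • u) with hk
    have hkn : ‖k‖ = 1 := by
      rw [hk, norm_smul, norm_inv, norm_norm, inv_mul_cancel₀ hq.ne']
    have hfk : f k = 0 := by
      rw [hk, map_smul, map_sub, map_smul, hfu', smul_eq_mul c, hcf, sub_self, smul_zero]
    have hmem : ‖u + ε • k‖ ∈ zSet X ε := ⟨u, k, hu, hkn, ⟨f, hf, hfu, hfk⟩, rfl⟩
    refine (csInf_le (zSet_bdd X ε) hmem).trans ?_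
    have := core_mono (p := -u) (w := w) (h := ε • k) (α := ε * (‖w - c • u‖)⁻¹)
      (β := ε * (‖w - c • u‖)⁻¹ * c) (by positivity) (by positivity)
      (by rw [hk]; module) (by rw [norm_smul, hkn, hwn, Real.norm_of_nonneg hε.le, mul_one])
      (by
        have h1 := norm_ge_of_f hf hu hfu hw
        have e : -u - w = -(u + w) := by abel
        rw [e, norm_neg, norm_neg, hu]; exact h1)
    have e1 : -u - ε • k = -(u + ε • k) := by abel
    have e2 : -u - w = -(u + w) := by abel
    rwa [e1, e2, norm_neg, norm_neg] at this

/-- convexity along a ray -/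
lemma ray_conv {X : Type*} [NormedAddCommGroup X] [NormedSpace ℝ X] {u v : X} {t : ℝ}
    (hu : ‖u‖ = 1) (h0 : 0 ≤ t) (h1 : t ≤ 1) :
    ‖u + t • v‖ - 1 ≤ t * (‖u + v‖ - 1) := by
  have e : u + t • v = (1 - t) • u + t • (u + v) := by module
  have : ‖u + t • v‖ ≤ (1 - t) * 1 + t * ‖u + v‖ := by
    rw [e]
    refine (norm_add_le _ _).trans ?_
    rw [norm_smul, norm_smul, hu, Real.norm_of_nonneg h0, Real.norm_of_nonneg (by linarith)]
  linarith

lemma zeta_le_s15 {X : Type*} [NormedAddCommGroup X] [NormedSpace ℝ X] {f : X →L[ℝ] ℝ}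
    (hf : f ≠ 0) {u v : X} {ε : ℝ} (hε : 0 < ε) (hu : ‖u‖ = 1) (hfu : f u = ‖f‖ * ‖u‖)
    (hv : 0 ≤ f v) (hvn : ε ≤ ‖v‖) (hne : (zSet X ε).Nonempty) :
    zetaConv X ε ≤ ‖u + v‖ := by
  have hv0 : 0 < ‖v‖ := by linarith
  have ht0 : 0 ≤ ε / ‖v‖ := by positivity
  have ht1 : ε / ‖v‖ ≤ 1 := (div_le_one hv0).mpr hvn
  have h1 := zeta_le_aux hf (w := (ε / ‖v‖) • v) hε hu hfu
    (by rw [map_smul, smul_eq_mul]; positivity)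
    (by rw [norm_smul, Real.norm_of_nonneg ht0]; field_simp) hne
  have h2 := ray_conv (v := v) hu ht0 ht1
  have h3 := norm_ge_of_f hf hu hfu hv
  nlinarith

lemma zSet_nonempty_of {X : Type*} [NormedAddCommGroup X] [NormedSpace ℝ X] {a : ℝ} (b : ℝ)
    (h : (zSet X a).Nonempty) : (zSet X b).Nonempty := by
  obtain ⟨t, x, y, h1, h2, h3, -⟩ := h
  exact ⟨_, x, y, h1, h2, h3, rfl⟩

lemma zSet_ge_one {X : Type*} [NormedAddCommGroup X] [NormedSpace ℝ X] {a t : ℝ}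
    (h : t ∈ zSet X a) : 1 ≤ t := by
  obtain ⟨x, y, h1, h2, ⟨f, hf, hfx, hfy⟩, rfl⟩ := h
  exact norm_ge_of_f hf h1 hfx (by rw [map_smul, hfy, smul_zero])

lemma zeta_growth {X : Type*} [NormedAddCommGroup X] [NormedSpace ℝ X] {a b : ℝ}
    (ha : 0 < a) (hab : a < b) (h : (zSet X a).Nonempty) :
    zetaConv X a - 1 ≤ a / b * (zetaConv X b - 1) := by
  have hb : 0 < b := ha.trans hab
  have key : 1 + b / a * (zetaConv X a - 1) ≤ zetaConv X b := by
    rw [zetaConv_eq X b]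
    refine le_csInf (zSet_nonempty_of b h) ?_
    rintro t ⟨x, y, h1, h2, h3, rfl⟩
    have h4 : zetaConv X a ≤ ‖x + a • y‖ := csInf_le (zSet_bdd X a) ⟨x, y, h1, h2, h3, rfl⟩
    have h5 := ray_conv (v := b • y) (t := a / b) h1 (by positivity)
      ((div_le_one hb).mpr hab.le)
    rw [smul_smul, div_mul_cancel₀ _ hb.ne'] at h5
    have h6 : b / a * (zetaConv X a - 1) ≤ b / a * (a / b * (‖x + b • y‖ - 1)) := by
      gcongr; linarith
    have h7 : b / a * (a / b * (‖x + b • y‖ - 1)) = ‖x + b • y‖ - 1 := by field_simp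
    linarith
  have h8 : a / b * (b / a * (zetaConv X a - 1)) = zetaConv X a - 1 := by field_simp
  rw [← h8]
  gcongr
  linarith

lemma zeta_gt_one {X : Type*} [NormedAddCommGroup X] [NormedSpace ℝ X] {a : ℝ}
    (ha : 0 < a) (h : (zSet X a).Nonempty) (hX : UnifConvex X) : 1 < zetaConv X a := by
  have hd := hX (a / (1 + a)) ⟨by positivity, by rw [div_le_iff₀ (by linarith)]; linarith⟩
  set d := modConv X (a / (1 + a)) with hdd
  suffices 1 + d ≤ zetaConv X a by linarith
  rw [zetaConv_eq]
  refine le_csInf h ?_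
  intro t ht
  have ht1 := zSet_ge_one ht
  obtain ⟨x, y, h1, h2, ⟨f, hf, hfx, hfy⟩, rfl⟩ := ht
  set N := ‖x + a • y‖ with hN
  have hN0 : 0 < N := by linarith
  have hNle : N ≤ 1 + a := by
    refine (norm_add_le _ _).trans ?_
    rw [norm_smul, h1, h2, Real.norm_of_nonneg ha.le, mul_one]
  have hmid : 1 ≤ ‖x + (a / 2) • y‖ :=
    norm_ge_of_f hf h1 hfx (by rw [map_smul, hfy, smul_zero])
  have hNi : ‖N⁻¹‖ = N⁻¹ := Real.norm_of_nonneg (by positivity)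
  have hle : d ≤ 1 - ‖N⁻¹ • x + N⁻¹ • (x + a • y)‖ / 2 := by
    refine csInf_le ?_ ⟨N⁻¹ • x, N⁻¹ • (x + a • y), ?_, ?_, ?_, rfl⟩
    · refine ⟨0, ?_⟩
      rintro t ⟨p, q, hp, hq, -, rfl⟩
      have := norm_add_le p q
      linarith
    · rw [norm_smul, hNi, h1, mul_one]; exact inv_le_one_of_one_le₀ ht1
    · rw [norm_smul, hNi, ← hN, inv_mul_cancel₀ hN0.ne']
    · have : N⁻¹ • x - N⁻¹ • (x + a • y) = -((N⁻¹ * a) • y) := by module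
      rw [this, norm_neg, norm_smul, h2, mul_one, Real.norm_of_nonneg (by positivity),
        div_eq_inv_mul]
      gcongr
  have e : N⁻¹ • x + N⁻¹ • (x + a • y) = (N⁻¹ * 2) • (x + (a / 2) • y) := by module
  rw [e, norm_smul, Real.norm_of_nonneg (by positivity)] at hle
  have h9 : N⁻¹ * 1 ≤ N⁻¹ * ‖x + (a / 2) • y‖ := by gcongr
  have h10 : N⁻¹ ≤ 1 - d := by linarith
  have h11 : N * N⁻¹ ≤ N * (1 - d) := by gcongr
  rw [mul_inv_cancel₀ hN0.ne'] at h11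
  nlinarith

lemma exists_support_s15 {X : Type*} [NormedAddCommGroup X] [NormedSpace ℝ X] {ρ : ℝ} (hρ : 0 < ρ)
    (K : Set X) (hK : Convex ℝ K) (x y : X) (hyK : y ∈ K) (hρdist : Metric.infDist x K = ρ)
    (hnear : ‖x - y‖ = ρ) :
    ∃ f : X →L[ℝ] ℝ, f ≠ 0 ∧ f (y - x) = ‖f‖ * ‖y - x‖ ∧ ∀ z ∈ K, 0 ≤ f (z - y) := by
  have hdisj : Disjoint (Metric.ball x ρ) K := by
    rw [Set.disjoint_left]
    intro z hz hzK
    have := Metric.infDist_le_dist_of_mem (x := x) hzK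
    rw [Metric.mem_ball, dist_comm] at hz
    linarith
  obtain ⟨f, s, h1, h2⟩ := geometric_hahn_banach_open (convex_ball x ρ) Metric.isOpen_ball hK hdisj
  have hball : ∀ h : X, ‖h‖ < ρ → f h < s - f x := by
    intro h hh
    have := h1 (x + h) (by simpa using hh)
    rw [map_add] at this; linarith
  have hsx : 0 < s - f x := by simpa using hball 0 (by simpa using hρ)
  have hys := h2 y hyK
  have hn : ‖y - x‖ = ρ := by rw [norm_sub_rev, hnear]
  have hf0 : f ≠ 0 := by
    rintro rfl
    simp at hsx hys
    linarith
  have hnorm : ‖f‖ ≤ (s - f x) / ρ := by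
    rw [← f.sSup_unit_ball_eq_norm]
    refine csSup_le ((Metric.nonempty_ball.mpr one_pos).image _) ?_
    rintro _ ⟨h, hh, rfl⟩
    have hh1 : ‖h‖ < 1 := by simpa using hh
    have hr : ‖ρ • h‖ < ρ := by
      rw [norm_smul, Real.norm_of_nonneg hρ.le]; nlinarith
    have a1 := hball (ρ • h) hr
    have a2 := hball (-(ρ • h)) (by rwa [norm_neg])
    rw [map_neg] at a2
    rw [map_smul, smul_eq_mul] at a1 a2
    have h3 : |f h| * ρ ≤ s - f x := by
      rcases abs_cases (f h) with ⟨e, -⟩ | ⟨e, -⟩ <;> rw [e] <;> linarith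
    rw [le_div_iff₀ hρ]
    exact h3
  rw [le_div_iff₀ hρ] at hnorm
  have hup : f (y - x) ≤ ‖f‖ * ‖y - x‖ := (le_abs_self _).trans (f.le_opNorm _)
  have hfyx : f (y - x) = f y - f x := map_sub _ _ _
  rw [hn] at hup
  refine ⟨f, hf0, ?_, ?_⟩
  · rw [hn]; linarith
  · intro z hz
    have := h2 z hz
    rw [map_sub]; linarith

/-- **Minimal deviation lemma.** If `y` is a nearest point of a convex set `K` to `x`
with `dist(x,K) = ρ`, and `dist(y, K ∩ L) > ρ_L`, then
`dist(x, K ∩ L) ≥ ρ · ζ_X(ρ_L/ρ)`, with strict inequality when `X` is uniformly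
convex. -/
theorem min_deviation_lemma
    {X : Type*} [NormedAddCommGroup X] [NormedSpace ℝ X]
    {ρ ρL : ℝ} (hρ : 0 < ρ) (hρL : 0 < ρL)
    (K L : Set X) (hK : Convex ℝ K) (hL : Convex ℝ L)
    (x y : X) (hyK : y ∈ K) (hρdist : Metric.infDist x K = ρ)
    (hnear : ‖x - y‖ = ρ)
    (hfar : ρL < Metric.infDist y (K ∩ L))
    (hne : (K ∩ L).Nonempty) :
    ρ * zetaConv X (ρL / ρ) ≤ Metric.infDist x (K ∩ L) ∧
      (UnifConvex X → ρ * zetaConv X (ρL / ρ) < Metric.infDist x (K ∩ L)) := by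
  have hmono : ρ ≤ Metric.infDist x (K ∩ L) := by
    rw [← hρdist]
    exact Metric.infDist_le_infDist_of_subset Set.inter_subset_left hne
  by_cases hS : (zSet X (ρL / ρ)).Nonempty
  · obtain ⟨f, hf, hfu, hfK⟩ := exists_support_s15 hρ K hK x y hyK hρdist hnear
    have hn : ‖y - x‖ = ρ := by rw [norm_sub_rev, hnear]
    set D := Metric.infDist y (K ∩ L) with hD
    have hD0 : 0 < D := hρL.trans hfar
    have hri : ‖ρ⁻¹‖ = ρ⁻¹ := Real.norm_of_nonneg (by positivity)
    have hu1 : ‖ρ⁻¹ • (y - x)‖ = 1 := by rw [norm_smul, hri, hn, inv_mul_cancel₀ hρ.ne']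
    have hmain : ρ * zetaConv X (D / ρ) ≤ Metric.infDist x (K ∩ L) := by
      rw [Metric.le_infDist hne]
      intro z hz
      have h1 : zetaConv X (D / ρ) ≤ ‖ρ⁻¹ • (y - x) + ρ⁻¹ • (z - y)‖ := by
        refine zeta_le_s15 hf (by positivity) hu1 ?_ ?_ ?_ (zSet_nonempty_of _ hS)
        · rw [hu1, map_smul, hfu, hn, smul_eq_mul]; field_simp
        · rw [map_smul, smul_eq_mul]
          exact mul_nonneg (by positivity) (hfK z hz.1)
        · rw [norm_smul, hri, div_eq_inv_mul]
          have := Metric.infDist_le_dist_of_mem (x := y) hz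
          rw [dist_comm, dist_eq_norm] at this
          gcongr
      have e : ρ⁻¹ • (y - x) + ρ⁻¹ • (z - y) = ρ⁻¹ • (z - x) := by module
      rw [e, norm_smul, hri] at h1
      rw [dist_comm, dist_eq_norm]
      calc ρ * zetaConv X (D / ρ) ≤ ρ * (ρ⁻¹ * ‖z - x‖) := by gcongr
        _ = ‖z - x‖ := by field_simp
    have ha : 0 < ρL / ρ := by positivity
    have hab : ρL / ρ < D / ρ := by gcongr
    have hg := zeta_growth ha hab hS
    set q := ρL / ρ / (D / ρ) with hq
    have hq1 : q < 1 := (div_lt_one (by positivity)).mpr hab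
    have hq0 : 0 < q := by positivity
    have hb1 : 1 ≤ zetaConv X (D / ρ) := by
      rw [zetaConv_eq]
      exact le_csInf (zSet_nonempty_of _ hS) fun t ht => zSet_ge_one ht
    refine ⟨le_trans ?_ hmain, fun hX => lt_of_lt_of_le ?_ hmain⟩
    · gcongr
      nlinarith
    · have h1 := zeta_gt_one ha hS hX
      gcongr
      nlinarith
  · have h0 : zetaConv X (ρL / ρ) = 0 := by
      rw [zetaConv_eq, Set.not_nonempty_iff_eq_empty.mp hS, Real.sInf_empty]
    rw [h0, mul_zero]
    exact ⟨by linarith, fun _ => by linarith⟩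
end

section
/- Let X be a uniformly convex real Banach space, let r be a Helly sequence for X, and let j ≥ 2. Let K and L be convex subsets of X and let p ∈ K be a nearest point of K to the origin (p ∈ K and ‖p‖ = dist(0, K)). Assume ‖p‖ > 1/r_{j−1} and dist(p, L) > 1. Then either K ∩ L is empty or dist(0, K ∩ L) > 1/r_j. -/
open scoped Classical

theorem aux_mono {X : Type*} [NormedAddCommGroup X] [NormedSpace ℝ X]
    (f : X →L[ℝ] ℝ) (x y : X) (hf : ‖f‖ = 1) (hx : ‖x‖ = 1) (hfx : f x = 1) (hfy : f y = 0)
    {s u : ℝ} (hs : 0 ≤ s) (hu : s ≤ u) : ‖x + s • y‖ ≤ ‖x + u • y‖ := by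
  rcases hs.eq_or_lt with h0 | h0
  · subst h0
    have h := f.le_opNorm (x + u • y)
    rw [map_add, map_smul, hfx, hfy, hf] at h
    simp at h
    simpa [hx] using h
  have hu0 : 0 < u := h0.trans_le hu
  have h1 : 1 ≤ ‖x + u • y‖ := by
    have h := f.le_opNorm (x + u • y)
    rw [map_add, map_smul, hfx, hfy, hf] at h
    simpa using h
  have e : x + s • y = (1 - s / u) • x + (s / u) • (x + u • y) := by
    rw [smul_add, smul_smul, div_mul_cancel₀ _ hu0.ne']
    module
  have hc : s / u ≤ 1 := (div_le_one hu0).2 hu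
  have hc0 : 0 ≤ s / u := by positivity
  rw [e]
  refine (norm_add_le _ _).trans ?_
  rw [norm_smul, norm_smul, hx, Real.norm_of_nonneg hc0, Real.norm_of_nonneg (by linarith)]
  nlinarith

theorem aux_key {X : Type*} [NormedAddCommGroup X] [NormedSpace ℝ X]
    (f : X →L[ℝ] ℝ) (x v : X) (hf : ‖f‖ = 1) (hx : ‖x‖ = 1) (hfx : f x = 1)
    (hv : ‖v‖ = 1) (hfv : 0 ≤ f v) {s u : ℝ} (hs : 0 < s) (hu : s ≤ u)
    (hz : 0 < zetaConv X s) : zetaConv X s ≤ ‖x + u • v‖ := by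
  have hbdd : BddBelow {t : ℝ | ∃ x y : X, ‖x‖ = 1 ∧ ‖y‖ = 1 ∧ QuasiOrth y x ∧
      t = ‖x + s • y‖} := ⟨0, by rintro t ⟨_, _, _, _, _, rfl⟩; exact norm_nonneg _⟩
  have hu0 : 0 < u := hs.trans_le hu
  set a := f v with ha
  set b := ‖v - a • x‖ with hb
  have hb0 : 0 ≤ b := norm_nonneg _
  rcases hb0.eq_or_lt with h0 | h0
  · have hva : v = a • x := by
      rw [hb] at h0
      exact sub_eq_zero.1 (norm_eq_zero.1 h0.symm)
    have ha1 : a = 1 := by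
      have := hv
      rw [hva, norm_smul, hx, Real.norm_of_nonneg hfv] at this
      linarith
    have hvx : v = x := by rw [hva, ha1, one_smul]
    have h1 : ‖x + u • v‖ = 1 + u := by
      rw [hvx, show x + u • x = (1 + u) • x by module, norm_smul, hx,
        Real.norm_of_nonneg (by linarith), mul_one]
    rw [h1]
    have hne : {t : ℝ | ∃ x y : X, ‖x‖ = 1 ∧ ‖y‖ = 1 ∧ QuasiOrth y x ∧
      t = ‖x + s • y‖}.Nonempty := by
      by_contra hne
      rw [Set.not_nonempty_iff_eq_empty] at hne
      rw [zetaConv, hne, Real.sInf_empty] at hz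
      exact lt_irrefl _ hz
    obtain ⟨t, ht⟩ := hne
    have h2 : zetaConv X s ≤ t := csInf_le hbdd ht
    obtain ⟨x0, y0, hx0, hy0, -, rfl⟩ := ht
    have h3 := norm_add_le x0 (s • y0)
    rw [norm_smul, hx0, hy0, Real.norm_of_nonneg hs.le] at h3
    linarith
  · set y := b⁻¹ • (v - a • x) with hy
    have hy1 : ‖y‖ = 1 := by
      rw [hy, norm_smul, Real.norm_of_nonneg (by positivity), ← hb, inv_mul_cancel₀ h0.ne']
    have hfy : f y = 0 := by
      rw [hy, map_smul, map_sub, map_smul, hfx, ← ha]; simp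
    have hvy : v = a • x + b • y := by
      rw [hy, smul_smul, mul_inv_cancel₀ h0.ne']; module
    clear_value y
    have hq : QuasiOrth y x := ⟨f, by intro h; rw [h] at hf; simp at hf, by simp [hf, hx, hfx], hfy⟩
    have hzs : zetaConv X s ≤ ‖x + s • y‖ := csInf_le hbdd ⟨x, y, hx, hy1, hq, rfl⟩
    refine hzs.trans ((aux_mono f x y hf hx hfx hfy hs.le hu).trans ?_)
    have hc : 0 < 1 + u * a := by positivity
    set β := u * b / (1 + u * a) with hβ
    have hβ0 : 0 ≤ β := by positivity
    have hcβ : (1 + u * a) * β = u * b := by rw [hβ]; field_simp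
    have e1 : x + u • v = (1 + u * a) • (x + β • y) := by
      rw [smul_add, smul_smul, hcβ, hvy]; module
    have e2 : ‖x + u • v‖ = (1 + u * a) * ‖x + β • y‖ := by
      rw [e1, norm_smul, Real.norm_of_nonneg hc.le]
    rw [e2]
    have hua : 0 ≤ u * a := by positivity
    rcases le_total u β with h | h
    · have := aux_mono f x y hf hx hfx hfy hu0.le h
      nlinarith [norm_nonneg (x + β • y)]
    · have e3 : u • v = β • y + (u * a) • (x + β • y) := by
        have : u • v = (1 + u * a) • (x + β • y) - x := by rw [← e1]; abel
        rw [this]; module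
      have h3 : u ≤ β + (u * a) * ‖x + β • y‖ := by
        have h4 := norm_add_le (β • y) ((u * a) • (x + β • y))
        rw [← e3, norm_smul, norm_smul, norm_smul, hv, hy1, Real.norm_of_nonneg hu0.le,
          Real.norm_of_nonneg hβ0, Real.norm_of_nonneg hua] at h4
        linarith
      have h5 : ‖x + u • y‖ ≤ ‖x + β • y‖ + (u - β) := by
        have h6 := norm_add_le (x + β • y) ((u - β) • y)
        rw [norm_smul, hy1, Real.norm_of_nonneg (by linarith),
          show x + β • y + (u - β) • y = x + u • y by module] at h6
        linarith
      linarith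

theorem aux_sep {X : Type*} [NormedAddCommGroup X] [NormedSpace ℝ X]
    (K : Set X) (hK : Convex ℝ K) (p : X) (hpK : p ∈ K)
    (hnear : ‖p‖ = Metric.infDist (0 : X) K) (hp : 0 < ‖p‖) :
    ∃ f : X →L[ℝ] ℝ, ‖f‖ = 1 ∧ f p = ‖p‖ ∧ ∀ q ∈ K, ‖p‖ ≤ f q := by
  have hd : Disjoint (Metric.ball (0 : X) ‖p‖) K := by
    rw [Set.disjoint_left]
    intro z hz hzK
    have := Metric.infDist_le_dist_of_mem (x := (0 : X)) hzK
    rw [Metric.mem_ball, dist_comm] at hz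
    linarith
  obtain ⟨f, u, h1, h2⟩ := geometric_hahn_banach_open (convex_ball (0 : X) ‖p‖)
    Metric.isOpen_ball hK hd
  have hu : 0 < u := by simpa using h1 0 (by simpa using hp)
  have hle : ∀ z, f z ≤ u / ‖p‖ * ‖z‖ := by
    intro z
    by_contra! h
    have hfz : 0 < f z := lt_of_le_of_lt (by positivity) h
    have := h1 ((u / f z) • z) (by
      rw [mem_ball_zero_iff, norm_smul, Real.norm_of_nonneg (by positivity), div_mul_eq_mul_div,
        div_lt_iff₀ hfz]
      rw [div_mul_eq_mul_div, div_lt_iff₀ hp] at h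
      linarith)
    rw [map_smul, smul_eq_mul, div_mul_cancel₀ _ hfz.ne'] at this
    exact lt_irrefl _ this
  have hn : ‖f‖ ≤ u / ‖p‖ := by
    refine f.opNorm_le_bound (by positivity) fun z => ?_
    rw [Real.norm_eq_abs, abs_le]
    have h3 := hle (-z)
    rw [map_neg, norm_neg] at h3
    exact ⟨by linarith, hle z⟩
  have hn' : ‖f‖ * ‖p‖ ≤ u := (le_div_iff₀ hp).1 hn
  have h4 : f p ≤ ‖f‖ * ‖p‖ := (le_abs_self _).trans (f.le_opNorm p)
  have h5 := h2 p hpK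
  have hfp : 0 < ‖f‖ := by
    by_contra! h
    nlinarith
  have h6 : f p = ‖f‖ * ‖p‖ := by linarith
  refine ⟨‖f‖⁻¹ • f, ?_, ?_, ?_⟩
  · rw [norm_smul, norm_inv, norm_norm, inv_mul_cancel₀ hfp.ne']
  · simp [h6, hfp.ne']
  · intro q hq
    have h7 := h2 q hq
    simp only [ContinuousLinearMap.smul_apply, smul_eq_mul]
    rw [inv_mul_eq_div, le_div_iff₀ hfp]
    linarith

/-- **Minimal deviation along the Helly sequence.** -/
theorem min_deviation_helly_sequence
    {X : Type*} [NormedAddCommGroup X] [NormedSpace ℝ X] [CompleteSpace X]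
    (hX : UnifConvex X) {r : ℕ → ℝ} (hr : IsHellySeq X r)
    {j : ℕ} (hj : 2 ≤ j)
    (K L : Set X) (hK : Convex ℝ K) (hL : Convex ℝ L)
    (p : X) (hpK : p ∈ K) (hnear : ‖p‖ = Metric.infDist (0 : X) K)
    (hp : 1 / r (j - 1) < ‖p‖) (hpL : 1 < Metric.infDist p L) :
    K ∩ L = ∅ ∨ 1 / r j < Metric.infDist (0 : X) (K ∩ L) := by
  obtain ⟨hr1, -, hr3⟩ := hr
  obtain ⟨k, rfl⟩ : ∃ k, j = k + 1 := ⟨j - 1, by omega⟩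
  have hk : 1 ≤ k := by omega
  rw [Nat.add_sub_cancel] at hp
  have hs := (hr1 (k + 1) (by omega)).1
  have hrk := (hr1 k hk).1
  have heq := hr3 k hk
  set s := r (k + 1) with hsdef
  have hz : 0 < zetaConv X s := by
    by_contra! h
    nlinarith
  have hR : 0 < ‖p‖ := lt_trans (by positivity) hp
  obtain ⟨f, hf, hfp, hfK⟩ := aux_sep K hK p hpK hnear hR
  rcases Set.eq_empty_or_nonempty (K ∩ L) with h | hne
  · exact Or.inl h
  right
  rcases lt_or_ge (1 / s) ‖p‖ with h | h
  · refine h.trans_le ?_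
    rw [hnear]
    exact Metric.infDist_le_infDist_of_subset Set.inter_subset_left hne
  · have hlt : 1 / s < ‖p‖ * zetaConv X s := by
      rw [div_lt_iff₀ hrk, ← heq] at hp
      rw [div_lt_iff₀ hs]
      linarith
    refine hlt.trans_le ((Metric.le_infDist hne).2 ?_)
    intro q hq
    rw [dist_zero_left]
    have ht : 1 < ‖q - p‖ := by
      have := Metric.infDist_le_dist_of_mem (x := p) hq.2
      rw [dist_comm, dist_eq_norm] at this
      linarith
    have ht0 : 0 < ‖q - p‖ := by linarith
    have hsR : s * ‖p‖ ≤ 1 := by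
      rw [le_div_iff₀ hs] at h
      linarith
    have key := aux_key f (‖p‖⁻¹ • p) (‖q - p‖⁻¹ • (q - p)) hf
      (by rw [norm_smul, norm_inv, norm_norm, inv_mul_cancel₀ hR.ne'])
      (by rw [map_smul, hfp, smul_eq_mul, inv_mul_cancel₀ hR.ne'])
      (by rw [norm_smul, norm_inv, norm_norm, inv_mul_cancel₀ ht0.ne'])
      (by
        rw [map_smul, map_sub, hfp, smul_eq_mul]
        have := hfK q hq.1
        exact mul_nonneg (by positivity) (by linarith))
      (s := s) (u := ‖q - p‖ / ‖p‖) hs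
      (by rw [le_div_iff₀ hR]; linarith) hz
    have e : ‖p‖⁻¹ • p + (‖q - p‖ / ‖p‖) • (‖q - p‖⁻¹ • (q - p)) = ‖p‖⁻¹ • q := by
      rw [smul_smul, show ‖q - p‖ / ‖p‖ * ‖q - p‖⁻¹ = ‖p‖⁻¹ by field_simp]
      module
    rw [e, norm_smul, norm_inv, norm_norm, inv_mul_eq_div, le_div_iff₀ hR] at key
    linarith
end
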